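/- arXiv:2003.07265 — 2 statements merged into one kernel-verified Lean document; each statement's English description precedes it below -/
import Mathlib

section
/- Let Ω ⊂ ℝⁿ be a bounded domain, μ0 a nontrivial finite positive Radon measure on Ω, and w ∈ L¹(Ω) a weight with w > 0 almost everywhere. Assume that for every finite signed Radon measure μ on Ω with μ(Ω) = 0 and |μ| ≤ κ μ0 (κ > 0) there exists a measurable vector field u : Ω → ℝⁿ with ‖u/w‖_∞ ≤ C κ (C independent of κ and μ) such that ∫_Ω u·∇h dx = −∫_Ω h dμ for all h ∈ 𝓔. Then the Poincaré inequality (P1) holds for the weight w: there is C' > 0 with ∫_Ω |f − f_Ω| dμ0 ≤ C' ∫_Ω |∇f| w for all f ∈ 𝓔, where f_Ω := μ0(Ω)^{−1} ∫_Ω f dμ0. -/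
open MeasureTheory Metric Set
open scoped RealInnerProductSpace ENNReal NNReal

noncomputable section

/-- `ℝⁿ` as a Euclidean space. -/
abbrev En (n : ℕ) := EuclideanSpace ℝ (Fin n)

/-- The geodesic distance, within the set `U`, from the point `x` to the base point `x0`:
the infimum of the lengths (total variations) of rectifiable curves joining `x` to `x0`
inside `U` (non-rectifiable curves have infinite length, so they do not affect the
infimum). -/
def geoDist {X : Type*} [PseudoEMetricSpace X] (U : Set X) (x0 x : X) : ℝ≥0∞ :=
  ⨅ (γ : ℝ → X) (_ : ContinuousOn γ (Set.Icc 0 1)) (_ : Set.MapsTo γ (Set.Icc 0 1) U)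
    (_ : γ 0 = x) (_ : γ 1 = x0), eVariationOn γ (Set.Icc 0 1)

/-- The open measurable cover `Ω̂` associated with a measurable cover `Ω̃`:
`Ω̂ = {x ∈ Ω̃ : dist(x, ℝⁿ \ Ω̃) > 0}`. -/
def hatSet {n : ℕ} (Ot : Set (En n)) : Set (En n) :=
  {x ∈ Ot | 0 < Metric.infDist x Otᶜ}

/-- The integral `∫_s f dμ` of a function against a signed measure, defined through the
Jordan decomposition of `μ`. -/
def signedIntegral {n : ℕ} (μ : MeasureTheory.SignedMeasure (En n)) (s : Set (En n))
    (f : En n → ℝ) : ℝ :=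
  (∫ x in s, f x ∂μ.toJordanDecomposition.posPart) -
    ∫ x in s, f x ∂μ.toJordanDecomposition.negPart

/-- `v` is a weak gradient of `f` on the open set `U`. -/
def HasWeakGradOn {n : ℕ} (f : En n → ℝ) (v : En n → En n) (U : Set (En n)) : Prop :=
  ∀ φ : En n → ℝ, ContDiff ℝ (⊤ : ℕ∞) φ → HasCompactSupport φ → tsupport φ ⊆ U →
    ∫ x in U, f x • gradient φ x = - ∫ x in U, φ x • v x

/-- Membership in the space `𝓖`: `f` is locally integrable on `U`, has the weak gradient
`v` on `U`, and for every `δ > 0` there is `r > n` with `|∇f| ∈ L^r(U_δ)`. -/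
def MemG {n : ℕ} (U : Set (En n)) (f : En n → ℝ) (v : En n → En n) : Prop :=
  MeasureTheory.LocallyIntegrableOn f U volume ∧ HasWeakGradOn f v U ∧
    ∀ δ : ℝ, 0 < δ → ∃ r : ℝ, (n : ℝ) < r ∧
      MeasureTheory.MemLp v (ENNReal.ofReal r)
        (volume.restrict {x ∈ U | δ < Metric.infDist x Uᶜ})

/-- Membership in the space `𝓔` attached to the weight `w`: `f ∈ 𝓖` (with weak gradient
`v`), `f ∈ L¹(μ0)` and `|∇f| w ∈ L¹(Ω)`. -/
def MemE {n : ℕ} (Ω U : Set (En n)) (μ0 : MeasureTheory.Measure (En n)) (w : En n → ℝ)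
    (f : En n → ℝ) (v : En n → En n) : Prop :=
  MemG U f v ∧ MeasureTheory.Integrable f μ0 ∧
    MeasureTheory.IntegrableOn (fun x => ‖v x‖ * w x) Ω volume

/-!
The divergence equation is tested against a single signed measure `φ μ0`: with `s` the sign of
`f - f_Ω`, the density `φ = (s - s_Ω) / 2` on `Ω` has mean zero and `|φ| ≤ 1`, and since subtracting
averages is self-adjoint, `∫ f φ dμ0` is half of `∫ |f - f_Ω| dμ0`. The solution `u` for this
measure satisfies `|u| ≤ C w`, so the same integral is at most `C ∫ |∇f| w`.
-/

section Average

variable {α : Type*} [MeasurableSpace α] {μ : Measure α}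

lemma norm_average_le_of_norm_le_const {E : Type*} [NormedAddCommGroup E] [NormedSpace ℝ E]
    [IsFiniteMeasure μ] {f : α → E} {c : ℝ} (hc : 0 ≤ c) (hf : ∀ᵐ x ∂μ, ‖f x‖ ≤ c) :
    ‖⨍ x, f x ∂μ‖ ≤ c := by
  rw [average_eq, norm_smul, Real.norm_of_nonneg (inv_nonneg.2 measureReal_nonneg)]
  calc (μ.real univ)⁻¹ * ‖∫ x, f x ∂μ‖
      ≤ (μ.real univ)⁻¹ * (c * μ.real univ) := by
        gcongr
        exact norm_integral_le_of_norm_le_const hf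
    _ = c * ((μ.real univ)⁻¹ * μ.real univ) := by ring
    _ ≤ c := mul_le_of_le_one_right hc inv_mul_le_one

lemma integral_mul_sub_average_comm {f g : α → ℝ} (hf : Integrable f μ) (hg : Integrable g μ)
    (hfg : Integrable (fun x => f x * g x) μ) :
    ∫ x, f x * (g x - ⨍ y, g y ∂μ) ∂μ = ∫ x, (f x - ⨍ y, f y ∂μ) * g x ∂μ := by
  simp only [mul_sub, sub_mul]
  rw [integral_sub hfg (hf.mul_const _), integral_sub hfg (hg.const_mul _), integral_mul_const,
    integral_const_mul, average_eq, average_eq, smul_eq_mul, smul_eq_mul]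
  ring

lemma measurable_coe_sign : Measurable fun x : ℝ => (SignType.sign x : ℝ) := by
  have hmono : Monotone ((↑) : SignType → ℝ) := by
    rintro (_ | _ | _) (_ | _ | _) h
    all_goals first | exact absurd h (by decide) | norm_num
  exact (hmono.comp SignType.sign.monotone).measurable

lemma abs_coe_sign_le_one (x : ℝ) : |(SignType.sign x : ℝ)| ≤ 1 := by
  cases SignType.sign x <;> simp

lemma exists_integral_mul_eq_half_integral_abs_sub_average [IsFiniteMeasure μ] {f : α → ℝ}
    (hf : Integrable f μ) :
    ∃ φ : α → ℝ, Integrable φ μ ∧ (∀ x, |φ x| ≤ 1) ∧ ∫ x, φ x ∂μ = 0 ∧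
      ∫ x, φ x * f x ∂μ = (∫ x, |f x - ⨍ y, f y ∂μ| ∂μ) / 2 := by
  set s : α → ℝ := fun x => SignType.sign (f x - ⨍ y, f y ∂μ)
  have hs_le : ∀ x, |s x| ≤ 1 := fun x => abs_coe_sign_le_one _
  have hs_meas : AEStronglyMeasurable s μ :=
    (measurable_coe_sign.comp_aemeasurable (hf.aemeasurable.sub_const _)).aestronglyMeasurable
  have hs : Integrable s μ := .of_bound hs_meas 1 (.of_forall hs_le)
  have hfs : Integrable (fun x => f x * s x) μ := hf.mul_bdd hs_meas (.of_forall hs_le)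
  refine ⟨fun x => (s x - ⨍ y, s y ∂μ) / 2, (hs.sub (integrable_const _)).div_const 2,
    fun x => ?_, ?_, ?_⟩
  · have h_avg : |⨍ y, s y ∂μ| ≤ 1 :=
      norm_average_le_of_norm_le_const (f := s) zero_le_one (.of_forall hs_le)
    rw [abs_div, abs_two, div_le_one two_pos]
    linarith [abs_sub (s x) (⨍ y, s y ∂μ), hs_le x]
  · rw [integral_div, integral_sub_average, zero_div]
  · calc ∫ x, (s x - ⨍ y, s y ∂μ) / 2 * f x ∂μ
        = (∫ x, f x * (s x - ⨍ y, s y ∂μ) ∂μ) / 2 := by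
          rw [← integral_div]
          exact integral_congr_ae (.of_forall fun x => by ring)
      _ = (∫ x, |f x - ⨍ y, f y ∂μ| ∂μ) / 2 := by
          rw [integral_mul_sub_average_comm hf hs hfs]
          simp only [s, self_mul_sign]

end Average

section SignedMeasure

variable {α : Type*} [MeasurableSpace α] {μ : Measure α}

lemma integral_toSignedMeasure_sub_toSignedMeasure {E : Type*} [NormedAddCommGroup E]
    [NormedSpace ℝ E] {ν : Measure α} [IsFiniteMeasure μ] [IsFiniteMeasure ν] {f : α → E}
    (hμ : Integrable f μ) (hν : Integrable f ν) :
    ∫ᵛ x, f x ∂<•(μ.toSignedMeasure - ν.toSignedMeasure) = ∫ x, f x ∂μ - ∫ x, f x ∂ν := by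
  rw [VectorMeasure.integral_sub_vectorMeasure
      (by rwa [VectorMeasure.Integrable, Measure.variation_toSignedMeasure])
      (by rwa [VectorMeasure.Integrable, Measure.variation_toSignedMeasure]),
    VectorMeasure.integral_toSignedMeasure, VectorMeasure.integral_toSignedMeasure]

lemma totalVariation_withDensityᵥ_le {φ : α → ℝ} (hφ : Integrable φ μ)
    (hφ_le : ∀ᵐ x ∂μ, |φ x| ≤ 1) :
    SignedMeasure.totalVariation (μ.withDensityᵥ φ) ≤ μ := by
  rw [SignedMeasure.totalVariation_eq_variation, Measure.variation_withDensityᵥ hφ]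
  calc μ.withDensity (fun x => ‖φ x‖ₑ) ≤ μ.withDensity 1 := by
        refine withDensity_mono (hφ_le.mono fun x hx => ?_)
        simpa only [Real.enorm_eq_ofReal_abs, Pi.one_apply, ENNReal.ofReal_le_one] using hx
    _ = μ := withDensity_one

section Density

variable {E : Type*} [NormedAddCommGroup E] [NormedSpace ℝ E] {φ : α → ℝ} {f : α → E}

lemma integrable_withDensity_ofReal (hφ : AEMeasurable φ μ)
    (hφf : Integrable (fun x => φ x • f x) μ) :
    Integrable f (μ.withDensity fun x => ENNReal.ofReal (φ x)) := by
  rw [integrable_withDensity_iff_integrable_smul₀' hφ.ennreal_ofReal (by simp)]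
  refine (hφf.indicator₀ (nullMeasurableSet_lt aemeasurable_const hφ : NullMeasurableSet
    {x | 0 < φ x} μ)).congr (.of_forall fun x => ?_)
  by_cases hx : 0 < φ x
  · simp [hx, hx.le]
  · simp [hx, ENNReal.ofReal_of_nonpos (not_lt.1 hx)]

lemma integral_withDensityᵥ (hφ : Integrable φ μ) (hφf : Integrable (fun x => φ x • f x) μ) :
    ∫ᵛ x, f x ∂<•(μ.withDensityᵥ φ) = ∫ x, φ x • f x ∂μ := by
  have := isFiniteMeasure_withDensity_ofReal hφ.2
  have := isFiniteMeasure_withDensity_ofReal hφ.neg.2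
  have hφ_neg : AEMeasurable (fun x => -φ x) μ := hφ.aemeasurable.neg
  have hf_pos : Integrable f (μ.withDensity fun x => ENNReal.ofReal (φ x)) :=
    integrable_withDensity_ofReal hφ.aemeasurable hφf
  have hf_neg : Integrable f (μ.withDensity fun x => ENNReal.ofReal (-φ x)) :=
    integrable_withDensity_ofReal hφ_neg (by simpa using hφf.neg)
  rw [withDensityᵥ_eq_withDensity_pos_part_sub_withDensity_neg_part hφ,
    integral_toSignedMeasure_sub_toSignedMeasure hf_pos hf_neg,
    integral_withDensity_eq_integral_toReal_smul₀ hφ.aemeasurable.ennreal_ofReal (by simp),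
    integral_withDensity_eq_integral_toReal_smul₀ hφ_neg.ennreal_ofReal (by simp),
    ← integral_sub]
  · simp only [ENNReal.toReal_ofReal', ← sub_smul, max_zero_sub_max_neg_zero_eq_self]
  · rwa [← integrable_withDensity_iff_integrable_smul₀' hφ.aemeasurable.ennreal_ofReal (by simp)]
  · rwa [← integrable_withDensity_iff_integrable_smul₀' hφ_neg.ennreal_ofReal (by simp)]

end Density

lemma restrict_eq_self_of_totalVariation_compl_eq_zero {σ : SignedMeasure α} {s : Set α}
    (hs : MeasurableSet s) (hσ : σ.totalVariation sᶜ = 0) : σ.restrict s = σ := by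
  have h_compl : σ.restrict sᶜ = 0 := by
    ext t ht
    rw [VectorMeasure.restrict_apply _ hs.compl ht]
    exact σ.null_of_totalVariation_zero (measure_mono_null inter_subset_right hσ)
  simpa [h_compl] using σ.restrict_add_restrict_compl hs

lemma signedIntegral_eq_setIntegral {n : ℕ} {σ : SignedMeasure (En n)} {s : Set (En n)}
    {f : En n → ℝ} (hs : MeasurableSet s) (hf : Integrable f σ.totalVariation) :
    signedIntegral σ s f = ∫ᵛ x in s, f x ∂<•σ := by
  have hf_pos : Integrable f σ.toJordanDecomposition.posPart :=
    hf.mono_measure (Measure.le_add_right le_rfl)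
  have hf_neg : Integrable f σ.toJordanDecomposition.negPart :=
    hf.mono_measure (Measure.le_add_left le_rfl)
  have hσ : σ.restrict s = (σ.toJordanDecomposition.posPart.restrict s).toSignedMeasure -
      (σ.toJordanDecomposition.negPart.restrict s).toSignedMeasure := by
    conv_lhs => rw [← σ.toSignedMeasure_toJordanDecomposition]
    rw [JordanDecomposition.toSignedMeasure, VectorMeasure.restrict_sub,
      VectorMeasure.restrict_toSignedMeasure hs, VectorMeasure.restrict_toSignedMeasure hs]
  rw [hσ, integral_toSignedMeasure_sub_toSignedMeasure hf_pos.restrict hf_neg.restrict,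
    signedIntegral]

theorem setIntegral_abs_sub_average_le_of_forall_signedMeasure {s : Set α} {f : α → ℝ} {K : ℝ}
    (hs : MeasurableSet s) (hμ : μ s ≠ ∞) (hf : IntegrableOn f s μ)
    (hK : ∀ σ : SignedMeasure α, σ s = 0 → σ.totalVariation ≤ μ → ∫ᵛ x in s, f x ∂<•σ ≤ K) :
    ∫ x in s, |f x - ⨍ y in s, f y ∂μ| ∂μ ≤ 2 * K := by
  have : IsFiniteMeasure (μ.restrict s) := isFiniteMeasure_restrict.2 hμ
  obtain ⟨φ, hφ, hφ_le, hφ_zero, hφ_eq⟩ := exists_integral_mul_eq_half_integral_abs_sub_average hf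
  set σ : SignedMeasure α := (μ.restrict s).withDensityᵥ φ
  have hσ_le : σ.totalVariation ≤ μ.restrict s :=
    totalVariation_withDensityᵥ_le hφ (.of_forall hφ_le)
  have hσ_zero : σ s = 0 := by
    rw [withDensityᵥ_apply hφ hs, Measure.restrict_restrict hs, inter_self, hφ_zero]
  have hσ_restrict : σ.restrict s = σ := restrict_eq_self_of_totalVariation_compl_eq_zero hs <|
    le_antisymm ((hσ_le _).trans_eq (by simp [Measure.restrict_apply hs.compl])) zero_le
  have hφf : Integrable (fun x => φ x • f x) (μ.restrict s) :=
    hf.bdd_mul hφ.aestronglyMeasurable (.of_forall hφ_le)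
  have hσ_integral : ∫ᵛ x in s, f x ∂<•σ = (∫ x in s, |f x - ⨍ y in s, f y ∂μ| ∂μ) / 2 := by
    rw [hσ_restrict, integral_withDensityᵥ hφ hφf]
    exact hφ_eq
  linarith [hK σ hσ_zero (hσ_le.trans Measure.restrict_le_self)]

end SignedMeasure

section Pairing

variable {α F : Type*} [MeasurableSpace α] [NormedAddCommGroup F] [InnerProductSpace ℝ F]
  {μ ν : Measure α} {w : α → ℝ} {C : ℝ}

lemma abs_integral_inner_le_of_norm_le {u v : α → F} (hu : ∀ᵐ x ∂ν, ‖u x‖ ≤ C * w x)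
    (hv : Integrable (fun x => ‖v x‖ * w x) ν) :
    |∫ x, ⟪u x, v x⟫ ∂ν| ≤ C * ∫ x, ‖v x‖ * w x ∂ν := by
  rw [← Real.norm_eq_abs, ← integral_const_mul]
  refine norm_integral_le_of_norm_le (hv.const_mul C) (hu.mono fun x hx => ?_)
  calc ‖⟪u x, v x⟫‖ ≤ ‖u x‖ * ‖v x‖ := norm_inner_le_norm _ _
    _ ≤ C * w x * ‖v x‖ := by gcongr
    _ = C * (‖v x‖ * w x) := by ring

theorem stmt_2_general {Ω : Set α} {f : α → ℝ} {v : α → F} (hΩ : MeasurableSet Ω)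
    (hμ : μ Ω ≠ ∞) (hf : IntegrableOn f Ω μ) (hv : Integrable (fun x => ‖v x‖ * w x) ν)
    (hsolv : ∀ σ : SignedMeasure α, σ Ω = 0 → σ.totalVariation ≤ μ →
      ∃ u : α → F, AEStronglyMeasurable u ν ∧ (∀ᵐ x ∂ν, ‖u x‖ ≤ C * w x) ∧
        ∫ x, ⟪u x, v x⟫ ∂ν = -∫ᵛ x in Ω, f x ∂<•σ) :
    ∫ x in Ω, |f x - ⨍ y in Ω, f y ∂μ| ∂μ ≤ 2 * C * ∫ x, ‖v x‖ * w x ∂ν := by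
  rw [mul_assoc]
  refine setIntegral_abs_sub_average_le_of_forall_signedMeasure hΩ hμ hf fun σ hσ_zero hσ_le => ?_
  obtain ⟨u, -, hu, hdiv⟩ := hsolv σ hσ_zero hσ_le
  have h_pairing : |∫ x, ⟪u x, v x⟫ ∂ν| ≤ C * ∫ x, ‖v x‖ * w x ∂ν :=
    abs_integral_inner_le_of_norm_le hu hv
  linarith [neg_le_of_abs_le h_pairing]

end Pairing

/-- If, for the weight `w ∈ L¹(Ω)`, `w > 0` a.e., every finite signed
Radon measure `μ` on `Ω` with `μ(Ω) = 0` and `|μ| ≤ κ μ0` admits a solution `u` of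
`div u = μ` with `‖u/w‖_∞ ≤ C κ` tested against all `h ∈ 𝓔`, then the Poincaré
inequality `(P1)` holds for `w`: `∫_Ω |f − f_Ω| dμ0 ≤ C' ∫_Ω |∇f| w` for all `f ∈ 𝓔`. -/
theorem stmt_2 (n : ℕ) (hn : 1 ≤ n) (Ω Ot : Set (En n))
    (hΩopen : IsOpen Ω) (hΩconn : IsConnected Ω) (hΩbdd : Bornology.IsBounded Ω)
    (hcov : Ω ⊆ Ot) (hcovnull : volume (Ot \ Ω) = 0)
    (μ0 : Measure (En n)) [IsFiniteMeasure μ0] (hμ0ne : μ0 ≠ 0) (hμ0supp : μ0 Ωᶜ = 0)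
    (w : En n → ℝ) (hwint : IntegrableOn w Ω volume)
    (hwpos : ∀ᵐ x ∂volume.restrict Ω, 0 < w x)
    (C : ℝ) (hC : 0 < C)
    (hsolv : ∀ κ : ℝ, 0 < κ →
      ∀ μ : MeasureTheory.SignedMeasure (En n),
        μ Ω = 0 → μ.totalVariation ≤ ENNReal.ofReal κ • μ0 →
        ∃ u : En n → En n, Measurable u ∧
          (∀ᵐ x ∂volume.restrict Ω, ‖u x‖ ≤ C * κ * w x) ∧
          ∀ (h : En n → ℝ) (v : En n → En n), MemE Ω (hatSet Ot) μ0 w h v →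
            ∫ x in Ω, ⟪u x, v x⟫ = - signedIntegral μ Ω h) :
    ∃ C' : ℝ, 0 < C' ∧
      ∀ (f : En n → ℝ) (v : En n → En n), MemE Ω (hatSet Ot) μ0 w f v →
        ∫ x in Ω, |f x - (∫ y in Ω, f y ∂μ0) / (μ0 Ω).toReal| ∂μ0 ≤
          C' * ∫ x in Ω, ‖v x‖ * w x := by
  refine ⟨2 * C, by positivity, fun f v hfv => ?_⟩
  rw [div_eq_inv_mul, ← smul_eq_mul, ← Measure.real, ← setAverage_eq]
  refine stmt_2_general hΩopen.measurableSet (measure_ne_top μ0 Ω) hfv.2.1.integrableOn hfv.2.2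
    fun σ hσ_zero hσ_le => ?_
  obtain ⟨u, hu, hu_le, hdiv⟩ := hsolv 1 one_pos σ hσ_zero (by simpa using hσ_le)
  exact ⟨u, hu.aestronglyMeasurable, by simpa using hu_le, by
    rw [hdiv f v hfv, signedIntegral_eq_setIntegral hΩopen.measurableSet
      (hfv.2.1.mono_measure hσ_le)]⟩
end
end

section
/- Let Ω ⊂ ℝⁿ be a bounded domain, μ0 a nontrivial finite positive Radon measure on Ω, and w ∈ L¹(Ω) a positive weight. Then the Poincaré inequality (P1) holds for w if and only if the inequality (P1*) holds for w. -/
open MeasureTheory Metric Set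
open scoped RealInnerProductSpace ENNReal NNReal

noncomputable section

/-- The Poincaré inequality `(P1)` for the weight `w`: there is `C > 0` such that
`∫_Ω |f − f_Ω| dμ0 ≤ C ∫_Ω |∇f| w` for all `f ∈ 𝓔`. -/
def P1 {n : ℕ} (Ω U : Set (En n)) (μ0 : MeasureTheory.Measure (En n))
    (w : En n → ℝ) : Prop :=
  ∃ C : ℝ, 0 < C ∧
    ∀ (f : En n → ℝ) (v : En n → En n), MemE Ω U μ0 w f v →
      ∫ x in Ω, |f x - (∫ y in Ω, f y ∂μ0) / (μ0 Ω).toReal| ∂μ0 ≤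
        C * ∫ x in Ω, ‖v x‖ * w x

/-- The inequality `(P1*)` for the weight `w`: there is `C > 0` such that
`∫_Ω |f| dμ0 ≤ C (1 + μ0(Ω)/μ0(E)) ∫_Ω |∇f| w` for all `f ∈ 𝓖` whose zero set `E`
has `μ0(E) > 0` (stated with lower integrals, so that finiteness of the right-hand
side entails `f ∈ L¹(μ0)`). -/
def P1star {n : ℕ} (Ω U : Set (En n)) (μ0 : MeasureTheory.Measure (En n))
    (w : En n → ℝ) : Prop :=
  ∃ C : ℝ, 0 < C ∧
    ∀ (f : En n → ℝ) (v : En n → En n), MemG U f v →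
      0 < μ0 {x ∈ Ω | f x = 0} →
      ∫⁻ x in Ω, ENNReal.ofReal |f x| ∂μ0 ≤
        ENNReal.ofReal C * (1 + μ0 Ω / μ0 {x ∈ Ω | f x = 0}) *
          ∫⁻ x in Ω, ENNReal.ofReal (‖v x‖ * w x)

/-!
The functions in `𝓖` are genuine functions rather than classes modulo null sets, whereas `μ0` may
be singular. Since the indicator of a Lebesgue-null set has weak gradient zero, `(P1)` forces such
a set to be `μ0`-null or `μ0`-conull. Hence either `μ0 ≪ volume` or `μ0` sits at one point, and in
both cases every `f ∈ 𝓖` is `μ0`-measurable.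

Given this, `(P1)` applies to the bounded truncations `g = r sin (f / r)`, which vanish where `f`
does. If `g = 0` on `E`, then `μ0 E |m| ≤ ∫ |g - m|` for the mean `m` of `g`, so that
`∫ |g| ≤ (1 + μ0 Ω / μ0 E) ∫ |g - m|`; letting `r → ∞` gives `(P1*)` by Fatou's lemma.

Conversely, if `c` is a median of `f` for `μ0`, then both `(f - c)⁺` and `(c - f)⁺` vanish on sets
of measure at least `μ0 Ω / 2`. Applying `(P1*)` to `C¹` approximations of these positive parts
bounds `∫ |f - c|`, hence also `∫ |f - m| ≤ 2 ∫ |f - c|`.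

Only compositions with `C¹` and `1`-Lipschitz functions are used; the chain rule for those follows
from mollification, and they do not increase the energy.
-/

open Filter Topology Convolution

section MeasureTheory

variable {α G : Type*} {mα : MeasurableSpace α} {μ : Measure α} [NormedAddCommGroup G]

/- Pratt's trick: `b i + ‖g‖ - ‖F i - g‖` is nonnegative and tends to `2 ‖g‖`; truncated at its
limit, it is dominated. -/
lemma tendsto_lintegral_enorm_sub_of_norm_le {ι : Type*} {l : Filter ι}
    [l.IsCountablyGenerated] {F : ι → α → G} {g : α → G} {b : ι → α → ℝ}
    (hF : ∀ i, AEStronglyMeasurable (F i) μ) (hg : Integrable g μ) (hb : ∀ i, Integrable (b i) μ)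
    (hFb : ∀ i x, ‖F i x‖ ≤ b i x)
    (hFg : ∀ᵐ x ∂μ, Tendsto (F · x) l (𝓝 (g x)))
    (hbg : ∀ᵐ x ∂μ, Tendsto (b · x) l (𝓝 ‖g x‖))
    (hint : Tendsto (fun i ↦ ∫ x, b i x ∂μ) l (𝓝 (∫ x, ‖g x‖ ∂μ))) :
    Tendsto (fun i ↦ ∫⁻ x, ‖F i x - g x‖ₑ ∂μ) l (𝓝 0) := by
  have hFi (i : ι) : Integrable (F i) μ := (hb i).mono' (hF i) (.of_forall (hFb i))
  have hsub (i : ι) : Integrable (fun x ↦ ‖F i x - g x‖) μ := ((hFi i).sub hg).norm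
  let m (i : ι) (x : α) : ℝ := min (b i x + ‖g x‖ - ‖F i x - g x‖) (2 * ‖g x‖)
  have hm (i : ι) : Integrable (m i) μ :=
    (((hb i).add hg.norm).sub (hsub i)).inf (hg.norm.const_mul 2)
  have hm_nonneg (i : ι) (x : α) : 0 ≤ m i x :=
    le_min (by linarith [norm_sub_le (F i x) (g x), hFb i x]) (by positivity)
  have hm_lim : Tendsto (fun i ↦ ∫ x, m i x ∂μ) l (𝓝 (2 * ∫ x, ‖g x‖ ∂μ)) := by
    rw [← integral_const_mul]
    refine tendsto_integral_filter_of_dominated_convergence (fun x ↦ 2 * ‖g x‖)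
      (.of_forall fun i ↦ (hm i).aestronglyMeasurable) (.of_forall fun i ↦ .of_forall fun x ↦ ?_)
      (hg.norm.const_mul 2) ?_
    · rw [Real.norm_of_nonneg (hm_nonneg i x)]
      exact min_le_right _ _
    · filter_upwards [hFg, hbg] with x hFx hbx
      simpa [m, two_mul] using
        ((hbx.add_const ‖g x‖).sub (hFx.sub_const (g x)).norm).min
          (tendsto_const_nhds (x := 2 * ‖g x‖))
  have hle (i : ι) :
      ∫ x, ‖F i x - g x‖ ∂μ ≤ ∫ x, b i x ∂μ + ∫ x, ‖g x‖ ∂μ - ∫ x, m i x ∂μ := by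
    rw [← integral_add' (hb i) hg.norm, ← integral_sub' ((hb i).add hg.norm) (hm i)]
    refine integral_mono (hsub i) (((hb i).add hg.norm).sub (hm i)) fun x ↦ ?_
    exact le_sub_comm.1 (min_le_left _ _)
  have hzero : Tendsto (fun i ↦ ∫ x, ‖F i x - g x‖ ∂μ) l (𝓝 0) := by
    refine squeeze_zero (fun i ↦ integral_nonneg fun x ↦ norm_nonneg _) hle ?_
    simpa [two_mul] using (hint.add_const (∫ x, ‖g x‖ ∂μ)).sub hm_lim
  have hofReal (i : ι) :
      ENNReal.ofReal (∫ x, ‖F i x - g x‖ ∂μ) = ∫⁻ x, ‖F i x - g x‖ₑ ∂μ :=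
    ofReal_integral_norm_eq_lintegral_enorm ((hFi i).sub hg)
  simpa only [hofReal, ENNReal.ofReal_zero] using ENNReal.tendsto_ofReal hzero

lemma tendsto_lintegral_enorm_smul_sub_smul [NormedSpace ℝ G]
    {c : ℕ → α → ℝ} {c₀ : α → ℝ} {g : ℕ → α → G} {g₀ : α → G} {K : ℝ≥0}
    (hc : ∀ k, AEStronglyMeasurable (c k) μ) (hcK : ∀ k x, ‖c k x‖ ≤ K)
    (hcc₀ : ∀ᵐ x ∂μ, Tendsto (c · x) atTop (𝓝 (c₀ x))) (hg₀ : Integrable g₀ μ)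
    (hg : Tendsto (fun k ↦ ∫⁻ x, ‖g k x - g₀ x‖ₑ ∂μ) atTop (𝓝 0)) :
    Tendsto (fun k ↦ ∫⁻ x, ‖c k x • g k x - c₀ x • g₀ x‖ₑ ∂μ) atTop (𝓝 0) := by
  have hcg₀_meas (k : ℕ) : AEStronglyMeasurable (fun x ↦ c k x • g₀ x) μ := (hc k).smul hg₀.1
  have hlim : ∀ᵐ x ∂μ, Tendsto (fun k ↦ c k x • g₀ x) atTop (𝓝 (c₀ x • g₀ x)) := by
    filter_upwards [hcc₀] with x hx using hx.smul_const _
  have hcg₀ : Tendsto (fun k ↦ ∫⁻ x, ‖c k x • g₀ x - c₀ x • g₀ x‖ₑ ∂μ) atTop (𝓝 0) := by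
    simpa only [ofReal_norm] using tendsto_lintegral_norm_of_dominated_convergence hcg₀_meas
      (hg₀.norm.const_mul (K : ℝ)).2
      (fun k ↦ .of_forall fun x ↦ (norm_smul_le _ _).trans (by gcongr; exact hcK k x)) hlim
  have hdiff_meas (k : ℕ) : AEMeasurable (fun x ↦ ‖c k x • g₀ x - c₀ x • g₀ x‖ₑ) μ :=
    ((hcg₀_meas k).sub (aestronglyMeasurable_of_tendsto_ae _ hcg₀_meas hlim)).enorm
  have hcg (k : ℕ) : ∫⁻ x, ‖c k x • g k x - c₀ x • g₀ x‖ₑ ∂μ ≤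
      K * ∫⁻ x, ‖g k x - g₀ x‖ₑ ∂μ + ∫⁻ x, ‖c k x • g₀ x - c₀ x • g₀ x‖ₑ ∂μ := by
    rw [← lintegral_const_mul' _ _ ENNReal.coe_ne_top, ← lintegral_add_right' _ (hdiff_meas k)]
    refine lintegral_mono fun x ↦ ?_
    rw [← sub_add_sub_cancel _ (c k x • g₀ x), ← smul_sub]
    refine (enorm_add_le _ _).trans ?_
    gcongr
    rw [enorm_smul]
    gcongr
    exact enorm_le_coe.2 (hcK k x)
  refine tendsto_of_tendsto_of_tendsto_of_le_of_le tendsto_const_nhds ?_ (fun _ ↦ zero_le) hcg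
  simpa using (ENNReal.Tendsto.const_mul hg (.inr ENNReal.coe_ne_top)).add hcg₀

lemma tendsto_integral_smul_of_bounded_of_L1 [NormedSpace ℝ G]
    {c : ℕ → α → ℝ} {c₀ : α → ℝ} {g : ℕ → α → G} {g₀ : α → G} {K : ℝ≥0}
    (hc : ∀ k, AEStronglyMeasurable (c k) μ) (hcK : ∀ k x, ‖c k x‖ ≤ K)
    (hcc₀ : ∀ᵐ x ∂μ, Tendsto (c · x) atTop (𝓝 (c₀ x))) (hg : ∀ k, Integrable (g k) μ)
    (hg₀ : Integrable g₀ μ) (hgg₀ : Tendsto (fun k ↦ ∫⁻ x, ‖g k x - g₀ x‖ₑ ∂μ) atTop (𝓝 0)) :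
    Tendsto (fun k ↦ ∫ x, c k x • g k x ∂μ) atTop (𝓝 (∫ x, c₀ x • g₀ x ∂μ)) :=
  tendsto_integral_of_L1 _ ((aestronglyMeasurable_of_tendsto_ae _ hc hcc₀).smul hg₀.1)
    (.of_forall fun k ↦ (hg k).bdd_smul K (hc k) (.of_forall (hcK k)))
    (tendsto_lintegral_enorm_smul_sub_smul hc hcK hcc₀ hg₀ hgg₀)

lemma integrable_comp_of_lipschitzWith [IsFiniteMeasure μ] {H : Type*} [NormedAddCommGroup H]
    {ψ : G → H} {K : ℝ≥0} (hψ : LipschitzWith K ψ) {f : α → G} (hf : Integrable f μ) :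
    Integrable (fun x ↦ ψ (f x)) μ := by
  refine ((integrable_const ‖ψ 0‖).add (hf.norm.const_mul (K : ℝ))).mono'
    (hψ.continuous.comp_aestronglyMeasurable hf.1) (.of_forall fun x ↦ ?_)
  calc ‖ψ (f x)‖ ≤ ‖ψ 0‖ + ‖ψ (f x) - ψ 0‖ := norm_le_insert' _ _
    _ ≤ ‖ψ 0‖ + K * ‖f x‖ := by simpa using hψ.norm_sub_le (f x) 0

lemma tendsto_integral_comp_smul_of_lipschitzWith [NormedSpace ℝ G] [IsFiniteMeasure μ]
    {ι : Type*} {l : Filter ι} {F : ι → α → ℝ} {f : α → ℝ} {ψ : ℝ → ℝ} {K M : ℝ≥0} {g : α → G}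
    (hψ : LipschitzWith K ψ) (hg : AEStronglyMeasurable g μ) (hgM : ∀ x, ‖g x‖ ≤ M)
    (hF : ∀ i, Integrable (F i) μ) (hf : Integrable f μ)
    (hFf : Tendsto (fun i ↦ ∫⁻ x, ‖F i x - f x‖ₑ ∂μ) l (𝓝 0)) :
    Tendsto (fun i ↦ ∫ x, ψ (F i x) • g x ∂μ) l (𝓝 (∫ x, ψ (f x) • g x ∂μ)) := by
  have hint {u : α → ℝ} (hu : Integrable u μ) : Integrable (fun x ↦ ψ (u x) • g x) μ :=
    (integrable_comp_of_lipschitzWith hψ hu).smul_bdd M hg (.of_forall hgM)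
  refine tendsto_integral_of_L1 _ (hint hf).1 (.of_forall fun i ↦ hint (hF i)) ?_
  have hle (i : ι) : ∫⁻ x, ‖ψ (F i x) • g x - ψ (f x) • g x‖ₑ ∂μ ≤
      K * M * ∫⁻ x, ‖F i x - f x‖ₑ ∂μ := by
    rw [← lintegral_const_mul' _ _ (by finiteness)]
    refine lintegral_mono fun x ↦ ?_
    rw [← sub_smul, enorm_smul, mul_right_comm]
    gcongr
    · simpa only [edist_eq_enorm_sub] using hψ.edist_le_mul (F i x) (f x)
    · exact enorm_le_coe.2 (hgM x)
  refine tendsto_of_tendsto_of_tendsto_of_le_of_le tendsto_const_nhds ?_ (fun _ ↦ zero_le) hle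
  simpa using ENNReal.Tendsto.const_mul hFf (.inr (by finiteness : (K * M : ℝ≥0∞) ≠ ⊤))

lemma setIntegral_smul_of_tsupport_subset [TopologicalSpace α] [NormedSpace ℝ G] {φ : α → ℝ}
    {S : Set α} (hφS : tsupport φ ⊆ S) (b : α → G) :
    ∫ x in S, φ x • b x ∂μ = ∫ x, φ x • b x ∂μ :=
  setIntegral_eq_integral_of_forall_compl_eq_zero fun x hx ↦ by
    rw [image_eq_zero_of_notMem_tsupport (notMem_subset hφS hx), zero_smul]

lemma lintegral_enorm_le_of_tendsto {F : ℕ → α → G} {f : α → G} {B : ℝ≥0∞}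
    (hF : ∀ k, AEStronglyMeasurable (F k) μ)
    (hFf : ∀ᵐ x ∂μ, Tendsto (F · x) atTop (𝓝 (f x))) (hB : ∀ k, ∫⁻ x, ‖F k x‖ₑ ∂μ ≤ B) :
    ∫⁻ x, ‖f x‖ₑ ∂μ ≤ B := by
  simp only [← eLpNorm_one_eq_lintegral_enorm] at hB ⊢
  exact (Lp.eLpNorm_lim_le_liminf_eLpNorm hF f hFf).trans
    (liminf_le_of_frequently_le' (.of_forall hB))

lemma le_measure_Iic_of_forall_gt {ν : Measure ℝ} [IsFiniteMeasure ν] {a : ℝ≥0∞} {c : ℝ}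
    (h : ∀ r > c, a ≤ ν (Iic r)) : a ≤ ν (Iic c) := by
  have hlim : Tendsto (fun r ↦ ν (Iic r)) (𝓝[>] c) (𝓝 (ν (⋂ r > c, Iic r))) :=
    tendsto_measure_biInter_gt (fun r _ ↦ measurableSet_Iic.nullMeasurableSet)
      (fun _ _ _ hij ↦ Iic_subset_Iic.2 hij) ⟨c + 1, lt_add_one c, measure_ne_top _ _⟩
  have hinter : ⋂ r > c, Iic r = Iic c := by
    ext x
    simp only [mem_iInter, mem_Iic]
    exact forall_gt_imp_ge_iff_le_of_dense
  rw [hinter] at hlim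
  exact ge_of_tendsto hlim (eventually_mem_nhdsWithin.mono h)

lemma le_measure_Ici_of_forall_lt {ν : Measure ℝ} [IsFiniteMeasure ν] {a : ℝ≥0∞} {c : ℝ}
    (h : ∀ r < c, a ≤ ν (Ici r)) : a ≤ ν (Ici c) := by
  have hmap (r : ℝ) : ν.map Neg.neg (Iic r) = ν (Ici (-r)) := by
    rw [Measure.map_apply measurable_neg measurableSet_Iic]
    exact congrArg ν (ext fun _ ↦ by simpa only [mem_preimage, mem_Iic, mem_Ici] using neg_le)
  simpa [hmap] using le_measure_Iic_of_forall_gt (ν := ν.map Neg.neg) (a := a) (c := -c)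
    fun r hr ↦ (hmap r).symm ▸ h _ (neg_lt.1 hr)

lemma half_measure_univ_le_Iic_or_Ici (ν : Measure ℝ) (c : ℝ) :
    ν univ / 2 ≤ ν (Iic c) ∨ ν univ / 2 ≤ ν (Ici c) := by
  by_contra! h
  refine (ENNReal.add_lt_add h.1 h.2).not_ge ?_
  rw [ENNReal.add_halves, ← Iic_union_Ici (a := c)]
  exact measure_union_le _ _

lemma exists_half_measure_univ_le_Iic_and_Ici (ν : Measure ℝ) [IsFiniteMeasure ν] :
    ∃ c, ν univ / 2 ≤ ν (Iic c) ∧ ν univ / 2 ≤ ν (Ici c) := by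
  rcases eq_or_ne (ν univ) 0 with h0 | h0
  · exact ⟨0, by simp [h0]⟩
  have hhalf : ν univ / 2 < ν univ := ENNReal.half_lt_self h0 (measure_ne_top _ _)
  let S : Set ℝ := {t | ν univ / 2 ≤ ν (Iic t)}
  have hS_nonempty : S.Nonempty :=
    (((tendsto_measure_Iic_atTop ν).eventually_const_lt hhalf).mono fun _ ↦ le_of_lt).exists
  have hS_bddBelow : BddBelow S := by
    obtain ⟨t, ht⟩ := ((tendsto_measure_Ici_atBot ν).eventually_const_lt hhalf).exists
    refine ⟨t, fun s hs ↦ not_lt.1 fun hst ↦ ?_⟩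
    refine (ENNReal.add_lt_add_of_le_of_lt (by finiteness) hs ht).not_ge ?_
    rw [ENNReal.add_halves, ← measure_union (Iic_disjoint_Ici.2 hst.not_ge) measurableSet_Ici]
    exact measure_mono (subset_univ _)
  refine ⟨sInf S, le_measure_Iic_of_forall_gt fun r hr ↦ ?_,
    le_measure_Ici_of_forall_lt fun r hr ↦ ?_⟩
  · obtain ⟨s, hs, hsr⟩ := exists_lt_of_csInf_lt hS_nonempty hr
    exact hs.trans (measure_mono (Iic_subset_Iic.2 hsr.le))
  · exact (half_measure_univ_le_Iic_or_Ici ν r).resolve_left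
      (notMem_of_lt_csInf (s := S) hr hS_bddBelow)

lemma lintegral_enorm_sub_average_le [NormedSpace ℝ G] [CompleteSpace G] [IsFiniteMeasure μ]
    {f : α → G} (hf : Integrable f μ) (c : G) :
    ∫⁻ x, ‖f x - ⨍ y, f y ∂μ‖ₑ ∂μ ≤ 2 * ∫⁻ x, ‖f x - c‖ₑ ∂μ := by
  have hconst : ‖c - ⨍ y, f y ∂μ‖ₑ * μ univ ≤ ∫⁻ x, ‖f x - c‖ₑ ∂μ := by
    have hmean : ∫ x, (c - f x) ∂μ = μ.real univ • (c - ⨍ y, f y ∂μ) := by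
      rw [integral_sub (integrable_const c) hf, integral_const, smul_sub, measure_smul_average]
    calc ‖c - ⨍ y, f y ∂μ‖ₑ * μ univ
        = ‖∫ x, (c - f x) ∂μ‖ₑ := by
          rw [hmean, enorm_smul, mul_comm, Real.enorm_of_nonneg measureReal_nonneg,
            ofReal_measureReal]
      _ ≤ ∫⁻ x, ‖f x - c‖ₑ ∂μ := by
          simpa only [enorm_sub_rev] using enorm_integral_le_lintegral_enorm (μ := μ) (c - f ·)
  calc ∫⁻ x, ‖f x - ⨍ y, f y ∂μ‖ₑ ∂μ
      ≤ ∫⁻ x, (‖f x - c‖ₑ + ‖c - ⨍ y, f y ∂μ‖ₑ) ∂μ :=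
        lintegral_mono fun x ↦ by simpa using enorm_add_le (f x - c) (c - ⨍ y, f y ∂μ)
    _ = ∫⁻ x, ‖f x - c‖ₑ ∂μ + ‖c - ⨍ y, f y ∂μ‖ₑ * μ univ := by
        rw [lintegral_add_right _ measurable_const, lintegral_const]
    _ ≤ 2 * ∫⁻ x, ‖f x - c‖ₑ ∂μ := by
        rw [two_mul]
        gcongr

lemma lintegral_enorm_le_of_eq_zero_on [IsFiniteMeasure μ] {f : α → G}
    (hf : AEStronglyMeasurable f μ) {E : Set α} (hE : μ E ≠ 0) (hfE : ∀ x ∈ E, f x = 0) (c : G) :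
    ∫⁻ x, ‖f x‖ₑ ∂μ ≤ (1 + μ univ / μ E) * ∫⁻ x, ‖f x - c‖ₑ ∂μ := by
  have hc : ‖c‖ₑ * μ E ≤ ∫⁻ x, ‖f x - c‖ₑ ∂μ := by
    refine le_trans ?_ (mul_meas_ge_le_lintegral₀ (hf.sub aestronglyMeasurable_const).enorm ‖c‖ₑ)
    gcongr
    intro x hx
    simp [hfE x hx]
  calc ∫⁻ x, ‖f x‖ₑ ∂μ
      ≤ ∫⁻ x, (‖f x - c‖ₑ + ‖c‖ₑ) ∂μ :=
        lintegral_mono fun x ↦ by simpa using enorm_add_le (f x - c) c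
    _ = ∫⁻ x, ‖f x - c‖ₑ ∂μ + μ univ * ‖c‖ₑ := by
        rw [lintegral_add_right _ measurable_const, lintegral_const, mul_comm]
    _ ≤ ∫⁻ x, ‖f x - c‖ₑ ∂μ + μ univ * ((∫⁻ x, ‖f x - c‖ₑ ∂μ) / μ E) := by
        gcongr
        exact ENNReal.le_div_iff_mul_le (.inl hE) (.inl (measure_ne_top _ _)) |>.2 hc
    _ = (1 + μ univ / μ E) * ∫⁻ x, ‖f x - c‖ₑ ∂μ := by
        simp only [div_eq_mul_inv]
        ring

lemma absolutelyContinuous_or_ae_eq_of_zero_one {μ ν : Measure α}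
    [MeasurableSpace.CountablySeparated α]
    (h : ∀ A, MeasurableSet A → ν A = 0 → (∀ᵐ x ∂μ, x ∈ A) ∨ ∀ᵐ x ∂μ, x ∉ A) :
    μ ≪ ν ∨ ∃ p, ∀ᵐ x ∂μ, x = p := by
  refine or_iff_not_imp_left.2 fun hac ↦ ?_
  obtain ⟨N, hN, hνN, hμN⟩ : ∃ N, MeasurableSet N ∧ ν N = 0 ∧ μ N ≠ 0 := by
    contrapose! hac
    exact .mk hac
  have hN_ae : ∀ᵐ x ∂μ, x ∈ N := (h N hN hνN).resolve_right fun hN' ↦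
    hμN (measure_eq_zero_iff_ae_notMem.2 hN')
  have : Nonempty α := (nonempty_of_measure_ne_zero hμN).to_type
  refine exists_eventuallyEq_const_of_forall_separating (f := id) MeasurableSet fun B hB ↦ ?_
  rcases h (B ∩ N) (hB.inter hN) (measure_mono_null inter_subset_right hνN) with hBN | hBN
  · exact .inl (hBN.mono fun x hx ↦ hx.1)
  · right
    filter_upwards [hBN, hN_ae] with x hxBN hxN hxB using hxBN ⟨hxB, hxN⟩

end MeasureTheory

section Truncation

/-- A `C¹` truncation at height `r` of the identity of `ℝ`. -/
def sinTrunc (r t : ℝ) : ℝ := r * Real.sin (r⁻¹ * t)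

lemma contDiff_sinTrunc (r : ℝ) : ContDiff ℝ 1 (sinTrunc r) :=
  contDiff_const.mul (Real.contDiff_sin.comp (contDiff_const.mul contDiff_id))

lemma lipschitzWith_sinTrunc (r : ℝ) : LipschitzWith 1 (sinTrunc r) := by
  refine LipschitzWith.of_dist_le_mul fun s t ↦ ?_
  have hr : |r| * |r⁻¹| ≤ 1 := by rw [abs_inv]; exact mul_inv_le_one
  have hsin : |Real.sin (r⁻¹ * s) - Real.sin (r⁻¹ * t)| ≤ |r⁻¹ * s - r⁻¹ * t| := by
    simpa [Real.dist_eq] using Real.lipschitzWith_sin.dist_le_mul (r⁻¹ * s) (r⁻¹ * t)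
  calc |r * Real.sin (r⁻¹ * s) - r * Real.sin (r⁻¹ * t)|
      ≤ |r| * |r⁻¹ * s - r⁻¹ * t| := by rw [← mul_sub, abs_mul]; gcongr
    _ = |r| * |r⁻¹| * |s - t| := by rw [← mul_sub, abs_mul, mul_assoc]
    _ ≤ 1 * |s - t| := by gcongr

@[simp]
lemma sinTrunc_zero (r : ℝ) : sinTrunc r 0 = 0 := by simp [sinTrunc]

lemma abs_sinTrunc_le (r t : ℝ) : |sinTrunc r t| ≤ |r| := by
  rw [sinTrunc, abs_mul]
  exact mul_le_of_le_one_right (abs_nonneg r) (Real.abs_sin_le_one _)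

lemma tendsto_sinTrunc (t : ℝ) : Tendsto (fun r ↦ sinTrunc r t) atTop (𝓝 t) := by
  have hsinc : Tendsto (fun r ↦ t * Real.sinc (r⁻¹ * t)) atTop (𝓝 t) := by
    have harg : Tendsto (fun r : ℝ ↦ r⁻¹ * t) atTop (𝓝 0) := by
      simpa using tendsto_inv_atTop_zero.mul_const t
    simpa using ((Real.continuous_sinc.tendsto 0).comp harg).const_mul t
  refine hsinc.congr' ?_
  filter_upwards [eventually_ne_atTop 0] with r hr
  rcases eq_or_ne t 0 with rfl | ht
  · simp
  · rw [sinTrunc, Real.sinc_of_ne_zero (by positivity)]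
    field_simp

/-- For `r > 0`, a `C¹` function vanishing on `(-∞, 0]` and of slope `1` on `[r⁻¹, ∞)`,
approximating the positive part as `r → ∞`. -/
def smoothPosPart (r t : ℝ) : ℝ := ∫ u in 0..t, min 1 (max 0 (r * u))

lemma hasDerivAt_smoothPosPart (r t : ℝ) :
    HasDerivAt (smoothPosPart r) (min 1 (max 0 (r * t))) t :=
  have hcont : Continuous fun u ↦ min 1 (max 0 (r * u)) := by fun_prop
  (hcont.integral_hasStrictDerivAt 0 t).hasDerivAt

lemma contDiff_smoothPosPart (r : ℝ) : ContDiff ℝ 1 (smoothPosPart r) := by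
  rw [contDiff_one_iff_deriv, funext fun t ↦ (hasDerivAt_smoothPosPart r t).deriv]
  exact ⟨fun t ↦ (hasDerivAt_smoothPosPart r t).differentiableAt, by fun_prop⟩

lemma lipschitzWith_smoothPosPart (r : ℝ) : LipschitzWith 1 (smoothPosPart r) := by
  refine lipschitzWith_of_nnnorm_deriv_le
    (fun t ↦ (hasDerivAt_smoothPosPart r t).differentiableAt) fun t ↦ ?_
  rw [(hasDerivAt_smoothPosPart r t).deriv, ← NNReal.coe_le_coe, coe_nnnorm,
    Real.norm_of_nonneg (le_min zero_le_one (le_max_left _ _))]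
  exact min_le_left _ _

lemma smoothPosPart_of_nonpos {r t : ℝ} (hr : 0 ≤ r) (ht : t ≤ 0) : smoothPosPart r t = 0 := by
  refine intervalIntegral.integral_zero_ae (.of_forall fun u hu ↦ ?_)
  rw [uIoc_of_ge ht] at hu
  rw [max_eq_left (mul_nonpos_of_nonneg_of_nonpos hr hu.2), min_eq_right zero_le_one]

lemma tendsto_smoothPosPart (t : ℝ) : Tendsto (fun r ↦ smoothPosPart r t) atTop (𝓝 (max t 0)) := by
  rcases le_or_gt t 0 with ht | ht
  · rw [max_eq_right ht]
    exact tendsto_const_nhds.congr' <|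
      (eventually_ge_atTop 0).mono fun r hr ↦ (smoothPosPart_of_nonpos hr ht).symm
  · rw [max_eq_left ht.le]
    have hlim : Tendsto (smoothPosPart · t) atTop (𝓝 (∫ _ in 0..t, (1 : ℝ))) := by
      refine intervalIntegral.tendsto_integral_filter_of_dominated_convergence (fun _ ↦ 1)
        (.of_forall fun r ↦ (by fun_prop : Continuous _).aestronglyMeasurable)
        (.of_forall fun r ↦ .of_forall fun u _ ↦ ?_) (by simp) (.of_forall fun u hu ↦ ?_)
      · rw [Real.norm_of_nonneg (le_min zero_le_one (le_max_left _ _))]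
        exact min_le_left _ _
      · rw [uIoc_of_le ht.le] at hu
        refine tendsto_const_nhds.congr' ?_
        filter_upwards [eventually_ge_atTop u⁻¹] with r hr
        have hru : 1 ≤ r * u := (inv_le_iff_one_le_mul₀ hu.1).1 hr
        rw [max_eq_right (by linarith), min_eq_left hru]
    simpa using hlim

end Truncation

section Mollification

variable {ι E G : Type*} {l : Filter ι} [NormedAddCommGroup E] [NormedSpace ℝ E]
  [MeasurableSpace E] {μ : Measure E} [NormedAddCommGroup G] [NormedSpace ℝ G]

lemma norm_normed_convolution_le [HasContDiffBump E] (ρ : ContDiffBump (0 : E)) (g : E → G)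
    (x : E) :
    ‖(ρ.normed μ ⋆[ContinuousLinearMap.lsmul ℝ ℝ, μ] g) x‖ ≤
      (ρ.normed μ ⋆[ContinuousLinearMap.lsmul ℝ ℝ, μ] fun y ↦ ‖g y‖) x := by
  refine (norm_integral_le_integral_norm _).trans_eq (integral_congr_ae (.of_forall fun y ↦ ?_))
  simp [norm_smul, abs_of_nonneg (ρ.nonneg_normed y)]

variable [FiniteDimensional ℝ E] [BorelSpace E] [μ.IsAddHaarMeasure]

lemma tendsto_lintegral_enorm_normed_convolution_sub [CompleteSpace G]
    [l.IsCountablyGenerated] {ρ : ι → ContDiffBump (0 : E)} {K : ℝ}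
    (hρ : Tendsto (fun i ↦ (ρ i).rOut) l (𝓝 0)) (hK : ∀ᶠ i in l, (ρ i).rOut ≤ K * (ρ i).rIn)
    {g : E → G} (hg : Integrable g μ) :
    Tendsto (fun i ↦ ∫⁻ x, ‖((ρ i).normed μ ⋆[ContinuousLinearMap.lsmul ℝ ℝ, μ] g) x - g x‖ₑ ∂μ)
      l (𝓝 0) := by
  have hint (i : ι) :
      ∫ x, ((ρ i).normed μ ⋆[ContinuousLinearMap.lsmul ℝ ℝ, μ] fun y ↦ ‖g y‖) x ∂μ =
        ∫ x, ‖g x‖ ∂μ := by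
    simp [integral_convolution (ContinuousLinearMap.lsmul ℝ ℝ) (ρ i).integrable_normed hg.norm,
      (ρ i).integral_normed]
  refine tendsto_lintegral_enorm_sub_of_norm_le
    (fun i ↦ ((ρ i).integrable_normed.integrable_convolution _ hg).1) hg
    (fun i ↦ (ρ i).integrable_normed.integrable_convolution _ hg.norm)
    (fun i x ↦ norm_normed_convolution_le (ρ i) g x) ?_ ?_ (by simp only [hint, tendsto_const_nhds])
  · exact ContDiffBump.ae_convolution_tendsto_right_of_locallyIntegrable hρ hK hg.locallyIntegrable
  · exact ContDiffBump.ae_convolution_tendsto_right_of_locallyIntegrable hρ hK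
      hg.norm.locallyIntegrable

end Mollification

section Gradient

variable {E : Type*} [NormedAddCommGroup E] [InnerProductSpace ℝ E] [CompleteSpace E]

lemma gradient_eq_zero_of_notMem_tsupport {φ : E → ℝ} {x : E} (hx : x ∉ tsupport φ) :
    gradient φ x = 0 := by
  rw [gradient, (notMem_tsupport_iff_eventuallyEq.1 hx).fderiv_eq]
  simp

lemma setIntegral_smul_gradient_of_tsupport_subset [MeasurableSpace E] {μ : Measure E} {φ : E → ℝ}
    {S : Set E} (hφS : tsupport φ ⊆ S) (a : E → ℝ) :
    ∫ x in S, a x • gradient φ x ∂μ = ∫ x, a x • gradient φ x ∂μ :=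
  setIntegral_eq_integral_of_forall_compl_eq_zero fun x hx ↦ by
    rw [gradient_eq_zero_of_notMem_tsupport (notMem_subset hφS hx), smul_zero]

lemma continuous_gradient {φ : E → ℝ} (hφ : ContDiff ℝ 1 φ) : Continuous (gradient φ) :=
  (InnerProductSpace.toDual ℝ E).symm.continuous.comp (hφ.continuous_fderiv one_ne_zero)

lemma hasCompactSupport_gradient {φ : E → ℝ} (hφ : HasCompactSupport φ) :
    HasCompactSupport (gradient φ) :=
  hφ.mono' fun _ hx ↦ not_imp_comm.1 gradient_eq_zero_of_notMem_tsupport hx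

lemma gradient_comp_const_sub {φ : E → ℝ} {x y : E} (hφ : DifferentiableAt ℝ φ (x - y)) :
    gradient (fun z ↦ φ (x - z)) y = -gradient φ (x - y) := by
  have h : HasFDerivAt (fun z ↦ φ (x - z)) (-fderiv ℝ φ (x - y)) y :=
    (hφ.hasFDerivAt.comp y ((hasFDerivAt_id y).const_sub x)).congr_fderiv (by ext; simp)
  rw [gradient, gradient, h.fderiv, map_neg]

lemma gradient_comp_of_differentiableAt {ψ : ℝ → ℝ} {f : E → ℝ} {x : E}
    (hψ : DifferentiableAt ℝ ψ (f x)) (hf : DifferentiableAt ℝ f x) :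
    gradient (ψ ∘ f) x = deriv ψ (f x) • gradient f x := by
  rw [gradient, gradient, (hψ.hasDerivAt.comp_hasFDerivAt x hf.hasFDerivAt).fderiv, map_smul]

variable [FiniteDimensional ℝ E] [MeasurableSpace E] [BorelSpace E] {μ : Measure E}
  [μ.IsAddHaarMeasure]

lemma integral_smul_gradient_eq_neg {h φ : E → ℝ} (hh : ContDiff ℝ 1 h) (hφ : ContDiff ℝ 1 φ)
    (hφ_supp : HasCompactSupport φ) :
    ∫ x, h x • gradient φ x ∂μ = -∫ x, φ x • gradient h x ∂μ := by
  have hhφ : Integrable (fun x ↦ h x • gradient φ x) μ :=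
    (hh.continuous.smul (continuous_gradient hφ)).integrable_of_hasCompactSupport
      (hasCompactSupport_gradient hφ_supp).smul_left
  have hφh : Integrable (fun x ↦ φ x • gradient h x) μ :=
    (hφ.continuous.smul (continuous_gradient hh)).integrable_of_hasCompactSupport
      hφ_supp.smul_right
  refine ext_inner_left ℝ fun e ↦ ?_
  have hinner (c : ℝ) (g : E → ℝ) (x : E) : ⟪e, c • gradient g x⟫ = c * fderiv ℝ g x e := by
    rw [inner_smul_right, real_inner_comm, inner_gradient_left]
  have hhφ_inner := hhφ.const_inner (𝕜 := ℝ) e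
  have hφh_inner := hφh.const_inner (𝕜 := ℝ) e
  rw [inner_neg_right, ← integral_inner hhφ, ← integral_inner hφh]
  simp only [hinner, mul_comm (φ _)] at hhφ_inner hφh_inner ⊢
  exact integral_mul_fderiv_eq_neg_fderiv_mul_of_integrable hφh_inner hhφ_inner
    ((hh.continuous.mul hφ.continuous).integrable_of_hasCompactSupport hφ_supp.mul_left)
    (fun x _ ↦ (hh.differentiable one_ne_zero).differentiableAt)
    (fun x _ ↦ (hφ.differentiable one_ne_zero).differentiableAt)

lemma integral_comp_smul_gradient_eq_neg {ψ : ℝ → ℝ} {h φ : E → ℝ} (hψ : ContDiff ℝ 1 ψ)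
    (hh : ContDiff ℝ 1 h) (hφ : ContDiff ℝ 1 φ) (hφ_supp : HasCompactSupport φ) :
    ∫ x, ψ (h x) • gradient φ x ∂μ = -∫ x, φ x • deriv ψ (h x) • gradient h x ∂μ := by
  have hgrad (x : E) : gradient (ψ ∘ h) x = deriv ψ (h x) • gradient h x :=
    gradient_comp_of_differentiableAt (hψ.differentiable one_ne_zero).differentiableAt
      (hh.differentiable one_ne_zero).differentiableAt
  simpa only [hgrad, Function.comp_apply] using
    integral_smul_gradient_eq_neg (μ := μ) (hψ.comp hh) hφ hφ_supp

lemma gradient_convolution {ρ f : E → ℝ} (hρ : ContDiff ℝ 1 ρ) (hρ_supp : HasCompactSupport ρ)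
    (hf : LocallyIntegrable f μ) (x : E) :
    gradient (ρ ⋆[ContinuousLinearMap.lsmul ℝ ℝ, μ] f) x = ∫ y, f y • gradient ρ (x - y) ∂μ := by
  have hexists : ConvolutionExists (fderiv ℝ ρ) f ((ContinuousLinearMap.lsmul ℝ ℝ).precompL E) μ :=
    (hρ_supp.fderiv ℝ).convolutionExists_left _ (hρ.continuous_fderiv one_ne_zero) hf
  have hcont : Continuous fun y ↦ gradient ρ (x - y) :=
    (continuous_gradient hρ).comp (continuous_const.sub continuous_id)
  have hint : Integrable (fun y ↦ f y • gradient ρ (x - y)) μ :=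
    hf.integrable_smul_right_of_hasCompactSupport hcont
      ((hasCompactSupport_gradient hρ_supp).comp_homeomorph (Homeomorph.subLeft x))
  refine ext_inner_left ℝ fun e ↦ ?_
  rw [← integral_inner hint, real_inner_comm, inner_gradient_left,
    (hρ_supp.hasFDerivAt_convolution_left (ContinuousLinearMap.lsmul ℝ ℝ) hρ hf x).fderiv,
    convolution_eq_swap, ContinuousLinearMap.integral_apply (hexists x).integrable_swap]
  refine integral_congr_ae (.of_forall fun y ↦ ?_)
  simp only [ContinuousLinearMap.precompL_apply, ContinuousLinearMap.lsmul_apply, smul_eq_mul,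
    inner_smul_right, mul_comm (f y)]
  rw [real_inner_comm, inner_gradient_left]

end Gradient

section WeakGradient

variable {n : ℕ} {f : En n → ℝ} {v : En n → En n} {U W : Set (En n)}

lemma hasWeakGradOn_iff :
    HasWeakGradOn f v U ↔ ∀ φ : En n → ℝ, ContDiff ℝ (⊤ : ℕ∞) φ → HasCompactSupport φ →
      tsupport φ ⊆ U → ∫ x, f x • gradient φ x = -∫ x, φ x • v x := by
  refine forall_congr' fun φ ↦ forall₃_congr fun _ _ hφU ↦ ?_
  rw [setIntegral_smul_gradient_of_tsupport_subset hφU, setIntegral_smul_of_tsupport_subset hφU]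

lemma HasWeakGradOn.mono (h : HasWeakGradOn f v U) (hWU : W ⊆ U) : HasWeakGradOn f v W :=
  hasWeakGradOn_iff.2 fun φ hφ hφ_supp hφW ↦
    hasWeakGradOn_iff.1 h φ hφ hφ_supp (hφW.trans hWU)

lemma HasWeakGradOn.congr (h : HasWeakGradOn f v U) {f' : En n → ℝ}
    {v' : En n → En n} (hf : ∀ᵐ x ∂volume.restrict U, f' x = f x)
    (hv : ∀ᵐ x ∂volume.restrict U, v' x = v x) : HasWeakGradOn f' v' U := by
  intro φ hφ hφ_supp hφU
  rw [integral_congr_ae (hf.mono fun x hx ↦ congrArg (· • gradient φ x) hx),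
    integral_congr_ae (hv.mono fun x hx ↦ congrArg (φ x • ·) hx)]
  exact h φ hφ hφ_supp hφU

lemma HasWeakGradOn.gradient_convolution (h : HasWeakGradOn f v U) (hf : LocallyIntegrable f)
    {ρ : En n → ℝ} (hρ : ContDiff ℝ (⊤ : ℕ∞) ρ) (hρ_supp : HasCompactSupport ρ) {x : En n}
    (hx : tsupport (fun y ↦ ρ (x - y)) ⊆ U) :
    gradient (ρ ⋆[ContinuousLinearMap.lsmul ℝ ℝ, volume] f) x =
      (ρ ⋆[ContinuousLinearMap.lsmul ℝ ℝ, volume] v) x := by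
  have hρ₁ : ContDiff ℝ 1 ρ := hρ.of_le (mod_cast le_top)
  have hgrad (y : En n) : gradient (fun z ↦ ρ (x - z)) y = -gradient ρ (x - y) :=
    gradient_comp_const_sub (hρ₁.differentiable one_ne_zero).differentiableAt
  have key : ∫ y, f y • gradient (fun z ↦ ρ (x - z)) y = -∫ y, ρ (x - y) • v y :=
    hasWeakGradOn_iff.1 h _ (hρ.comp (contDiff_const.sub contDiff_id))
      (hρ_supp.comp_homeomorph (Homeomorph.subLeft x)) hx
  simp only [hgrad, smul_neg, integral_neg, neg_inj] at key
  rw [_root_.gradient_convolution hρ₁ hρ_supp hf, key, convolution_eq_swap]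
  rfl

lemma HasWeakGradOn.exists_contDiff_tendsto_of_integrable (h : HasWeakGradOn f v U)
    (hU : IsOpen U) (hf : Integrable f) (hv : Integrable v) {S : Set (En n)} (hS : IsCompact S)
    (hSU : S ⊆ U) :
    ∃ F : ℕ → En n → ℝ, (∀ k, ContDiff ℝ 1 (F k)) ∧
      (∀ᵐ x, Tendsto (F · x) atTop (𝓝 (f x))) ∧
      Tendsto (fun k ↦ ∫⁻ x in S, ‖F k x - f x‖ₑ) atTop (𝓝 0) ∧
      Tendsto (fun k ↦ ∫⁻ x in S, ‖gradient (F k) x - v x‖ₑ) atTop (𝓝 0) := by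
  obtain ⟨δ, hδ, hδU⟩ := hS.exists_cthickening_subset_open hU hSU
  let ρ (k : ℕ) : ContDiffBump (0 : En n) :=
    ⟨δ / (k + 1) / 2, δ / (k + 1), by positivity, half_lt_self (by positivity)⟩
  have hρ_le (k : ℕ) : (ρ k).rOut ≤ δ := div_le_self hδ.le (by simp)
  have hρ_tendsto : Tendsto (fun k ↦ (ρ k).rOut) atTop (𝓝 0) :=
    tendsto_const_nhds.div_atTop (tendsto_natCast_atTop_atTop.atTop_add tendsto_const_nhds)
  have hρ_ratio : ∀ᶠ k in atTop, (ρ k).rOut ≤ 2 * (ρ k).rIn :=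
    .of_forall fun k ↦ (mul_div_cancel₀ _ two_ne_zero).ge
  have hρ_tsupport (k : ℕ) {x : En n} (hx : x ∈ S) :
      tsupport (fun y ↦ (ρ k).normed volume (x - y)) ⊆ U := by
    refine (closure_minimal (fun y hy ↦ ?_) isClosed_closedBall).trans
      ((closedBall_subset_cthickening hx δ).trans hδU)
    have hxy : x - y ∈ ball 0 (ρ k).rOut := (ρ k).support_normed_eq (μ := volume) ▸ hy
    rw [mem_closedBall, dist_comm, dist_eq_norm]
    exact (mem_ball_zero_iff.1 hxy).le.trans (hρ_le k)
  have hgrad (k : ℕ) {x : En n} (hx : x ∈ S) := h.gradient_convolution hf.locallyIntegrable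
    (ρ k).contDiff_normed (ρ k).hasCompactSupport_normed (hρ_tsupport k hx)
  refine ⟨fun k ↦ (ρ k).normed volume ⋆[ContinuousLinearMap.lsmul ℝ ℝ, volume] f,
    fun k ↦ (ρ k).hasCompactSupport_normed.contDiff_convolution_left _ (ρ k).contDiff_normed
      hf.locallyIntegrable,
    ContDiffBump.ae_convolution_tendsto_right_of_locallyIntegrable hρ_tendsto hρ_ratio
      hf.locallyIntegrable, ?_, ?_⟩
  · exact tendsto_of_tendsto_of_tendsto_of_le_of_le tendsto_const_nhds
      (tendsto_lintegral_enorm_normed_convolution_sub hρ_tendsto hρ_ratio hf) (fun _ ↦ zero_le)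
      fun _ ↦ setLIntegral_le_lintegral _ _
  · refine tendsto_of_tendsto_of_tendsto_of_le_of_le tendsto_const_nhds
      (tendsto_lintegral_enorm_normed_convolution_sub hρ_tendsto hρ_ratio hv) (fun _ ↦ zero_le)
      fun k ↦ (setLIntegral_congr_fun hS.measurableSet fun x hx ↦ ?_).trans_le
        (setLIntegral_le_lintegral S _)
    rw [hgrad k hx]

lemma HasWeakGradOn.exists_contDiff_tendsto (h : HasWeakGradOn f v U) (hU : IsOpen U)
    (hf : LocallyIntegrableOn f U) (hv : LocallyIntegrableOn v U) {S : Set (En n)}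
    (hS : IsCompact S) (hSU : S ⊆ U) :
    ∃ F : ℕ → En n → ℝ, (∀ k, ContDiff ℝ 1 (F k)) ∧
      (∀ᵐ x ∂volume.restrict S, Tendsto (F · x) atTop (𝓝 (f x))) ∧
      Tendsto (fun k ↦ ∫⁻ x in S, ‖F k x - f x‖ₑ) atTop (𝓝 0) ∧
      Tendsto (fun k ↦ ∫⁻ x in S, ‖gradient (F k) x - v x‖ₑ) atTop (𝓝 0) := by
  obtain ⟨W, hW, hSW, hWU, hW_compact⟩ := exists_open_between_and_isCompact_closure hS hU hSU
  have hfW : Integrable (W.indicator f) :=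
    ((hf.integrableOn_compact_subset hWU hW_compact).mono_set subset_closure).integrable_indicator
      hW.measurableSet
  have hvW : Integrable (W.indicator v) :=
    ((hv.integrableOn_compact_subset hWU hW_compact).mono_set subset_closure).integrable_indicator
      hW.measurableSet
  have hweak : HasWeakGradOn (W.indicator f) (W.indicator v) W :=
    (h.mono (subset_closure.trans hWU)).congr
      (ae_restrict_of_forall_mem hW.measurableSet fun x hx ↦ indicator_of_mem hx f)
      (ae_restrict_of_forall_mem hW.measurableSet fun x hx ↦ indicator_of_mem hx v)
  obtain ⟨F, hF, hF_ae, hF_L1, hF_grad⟩ :=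
    hweak.exists_contDiff_tendsto_of_integrable hW hfW hvW hS hSW
  have hS_ae : ∀ᵐ x ∂volume.restrict S, x ∈ S := ae_restrict_mem hS.measurableSet
  refine ⟨F, hF, ?_, hF_L1.congr fun k ↦ ?_, hF_grad.congr fun k ↦ ?_⟩
  · filter_upwards [ae_restrict_of_ae hF_ae, hS_ae] with x hx hxS
    simpa only [indicator_of_mem (hSW hxS)] using hx
  · refine lintegral_congr_ae (hS_ae.mono fun x hx ↦ ?_)
    simp only [indicator_of_mem (hSW hx)]
  · refine lintegral_congr_ae (hS_ae.mono fun x hx ↦ ?_)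
    simp only [indicator_of_mem (hSW hx)]

lemma norm_deriv_smul_le {G : Type*} [NormedAddCommGroup G] [NormedSpace ℝ G] {ψ : ℝ → ℝ}
    (hψ : LipschitzWith 1 ψ) (t : ℝ) (y : G) : ‖deriv ψ t • y‖ ≤ ‖y‖ := by
  rw [norm_smul]
  exact mul_le_of_le_one_left (norm_nonneg _) (by simpa using norm_deriv_le_of_lipschitz hψ)

lemma HasWeakGradOn.comp (h : HasWeakGradOn f v U) (hU : IsOpen U) (hf : LocallyIntegrableOn f U)
    (hv : LocallyIntegrableOn v U) {ψ : ℝ → ℝ} {K : ℝ≥0} (hψ : ContDiff ℝ 1 ψ)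
    (hψK : LipschitzWith K ψ) :
    HasWeakGradOn (ψ ∘ f) (fun x ↦ deriv ψ (f x) • v x) U := by
  refine hasWeakGradOn_iff.2 fun φ hφ hφ_supp hφU ↦ ?_
  set S := tsupport φ
  have hS : IsCompact S := hφ_supp
  have hφ₁ : ContDiff ℝ 1 φ := hφ.of_le (mod_cast le_top)
  have hdψ : Continuous (deriv ψ) := (contDiff_one_iff_deriv.1 hψ).2
  have hfS : IntegrableOn f S := hf.integrableOn_compact_subset hφU hS
  have hvS : IntegrableOn v S := hv.integrableOn_compact_subset hφU hS
  have : IsFiniteMeasure (volume.restrict S) := isFiniteMeasure_restrict.2 hS.measure_ne_top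
  obtain ⟨F, hF, hF_ae, hF_L1, hF_grad⟩ := h.exists_contDiff_tendsto hU hf hv hS hφU
  have hlhs : Tendsto (fun k ↦ ∫ x in S, ψ (F k x) • gradient φ x) atTop
      (𝓝 (∫ x in S, ψ (f x) • gradient φ x)) := by
    obtain ⟨M, hM⟩ := (continuous_gradient hφ₁).bounded_above_of_compact_support
      (hasCompactSupport_gradient hφ_supp)
    exact tendsto_integral_comp_smul_of_lipschitzWith hψK
      (continuous_gradient hφ₁).aestronglyMeasurable
      (fun x ↦ (hM x).trans (Real.le_coe_toNNReal M))
      (fun k ↦ (hF k).continuous.continuousOn.integrableOn_compact hS) hfS hF_L1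
  have hrhs : Tendsto (fun k ↦ ∫ x in S, (φ x * deriv ψ (F k x)) • gradient (F k) x) atTop
      (𝓝 (∫ x in S, (φ x * deriv ψ (f x)) • v x)) := by
    obtain ⟨M, hM⟩ := hφ₁.continuous.bounded_above_of_compact_support hφ_supp
    refine tendsto_integral_smul_of_bounded_of_L1 (K := M.toNNReal * K)
      (fun k ↦ (hφ₁.continuous.mul (hdψ.comp (hF k).continuous)).aestronglyMeasurable)
      (fun k x ↦ ?_) (hF_ae.mono fun x hx ↦ ((hdψ.tendsto _).comp hx).const_mul _)
      (fun k ↦ (continuous_gradient (hF k)).continuousOn.integrableOn_compact hS) hvS hF_grad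
    rw [norm_mul, NNReal.coe_mul]
    gcongr
    exacts [(hM x).trans (Real.le_coe_toNNReal M), norm_deriv_le_of_lipschitz hψK]
  simp only [mul_smul, setIntegral_smul_gradient_of_tsupport_subset (subset_refl S),
    setIntegral_smul_of_tsupport_subset (subset_refl S)] at hlhs hrhs
  exact tendsto_nhds_unique hlhs <| hrhs.neg.congr fun k ↦
    (integral_comp_smul_gradient_eq_neg hψ (hF k) hφ₁ hφ_supp).symm

lemma MemG.locallyIntegrableOn_gradient (h : MemG U f v) (hn : 1 ≤ n) (hU : IsOpen U)
    (hU_compl : Uᶜ.Nonempty) : LocallyIntegrableOn v U := by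
  refine (locallyIntegrableOn_iff hU.isLocallyClosed).2 fun K hKU hK ↦ ?_
  obtain ⟨δ, hδ, hδU⟩ := hK.exists_cthickening_subset_open hU hKU
  obtain ⟨r, hr, hv⟩ := h.2.2 (δ / 2) (half_pos hδ)
  have hK_sub : K ⊆ {x ∈ U | δ / 2 < infDist x Uᶜ} := fun x hx ↦ by
    refine ⟨hKU hx, (half_lt_self hδ).trans_le ((le_infDist hU_compl).2 fun y hy ↦ ?_)⟩
    contrapose! hy
    exact not_not.2 (hδU (mem_cthickening_of_dist_le y x δ K hx (dist_comm x y ▸ hy.le)))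
  have : IsFiniteMeasure (volume.restrict K) := isFiniteMeasure_restrict.2 hK.measure_ne_top
  refine (hv.mono_measure (Measure.restrict_mono_set volume hK_sub)).integrable ?_
  rw [ENNReal.one_le_ofReal]
  exact (mod_cast hn : (1 : ℝ) ≤ n).trans hr.le

lemma MemG.comp (h : MemG U f v) (hn : 1 ≤ n) (hU : IsOpen U) (hU_compl : Uᶜ.Nonempty)
    {ψ : ℝ → ℝ} (hψ : ContDiff ℝ 1 ψ) (hψ_lip : LipschitzWith 1 ψ) :
    MemG U (ψ ∘ f) (fun x ↦ deriv ψ (f x) • v x) := by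
  refine ⟨?_, h.2.1.comp hU h.1 (h.locallyIntegrableOn_gradient hn hU hU_compl) hψ hψ_lip,
    fun δ hδ ↦ ?_⟩
  · refine (locallyIntegrableOn_iff hU.isLocallyClosed).2 fun K hKU hK ↦ ?_
    have : IsFiniteMeasure (volume.restrict K) := isFiniteMeasure_restrict.2 hK.measure_ne_top
    exact integrable_comp_of_lipschitzWith hψ_lip (h.1.integrableOn_compact_subset hKU hK)
  · obtain ⟨r, hr, hv⟩ := h.2.2 δ hδ
    have hf : AEStronglyMeasurable f (volume.restrict {x ∈ U | δ < infDist x Uᶜ}) :=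
      h.1.aestronglyMeasurable.mono_measure (Measure.restrict_mono_set volume fun x hx ↦ hx.1)
    refine ⟨r, hr, hv.of_le (((contDiff_one_iff_deriv.1 hψ).2.comp_aestronglyMeasurable hf).smul
      hv.1) (.of_forall fun x ↦ ?_)⟩
    exact norm_deriv_smul_le hψ_lip _ _

end WeakGradient

section Poincare

variable {n : ℕ} {Ω U : Set (En n)} {μ0 : Measure (En n)} {w : En n → ℝ} {f : En n → ℝ}
  {v : En n → En n}

/-- The weighted Dirichlet energy `∫_Ω |v| w` of a vector field `v`, as a lower integral so that
it makes sense, with value `∞`, when `|v| w` is not integrable. -/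
def weightedEnergy (Ω : Set (En n)) (w : En n → ℝ) (v : En n → En n) : ℝ≥0∞ :=
  ∫⁻ x in Ω, ENNReal.ofReal (‖v x‖ * w x)

lemma weightedEnergy_mono (hw : 0 ≤ᵐ[volume.restrict Ω] w) {v' : En n → En n}
    (h : ∀ x, ‖v x‖ ≤ ‖v' x‖) : weightedEnergy Ω w v ≤ weightedEnergy Ω w v' :=
  lintegral_mono_ae <| hw.mono fun x hx ↦
    ENNReal.ofReal_le_ofReal (mul_le_mul_of_nonneg_right (h x) hx)

lemma integrableOn_norm_mul_iff_weightedEnergy_ne_top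
    (hv : AEStronglyMeasurable v (volume.restrict Ω))
    (hw_meas : AEStronglyMeasurable w (volume.restrict Ω)) (hw : 0 ≤ᵐ[volume.restrict Ω] w) :
    IntegrableOn (fun x ↦ ‖v x‖ * w x) Ω ↔ weightedEnergy Ω w v ≠ ∞ :=
  (lintegral_ofReal_ne_top_iff_integrable (hv.norm.mul hw_meas)
    (hw.mono fun _ hx ↦ mul_nonneg (norm_nonneg _) hx)).symm

lemma ofReal_integral_norm_mul_eq_weightedEnergy (hw : 0 ≤ᵐ[volume.restrict Ω] w)
    (hvw : IntegrableOn (fun x ↦ ‖v x‖ * w x) Ω) :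
    ENNReal.ofReal (∫ x in Ω, ‖v x‖ * w x) = weightedEnergy Ω w v :=
  ofReal_integral_eq_lintegral_ofReal hvw (hw.mono fun _ hx ↦ mul_nonneg (norm_nonneg _) hx)

lemma restrict_eq_self_of_measure_compl_eq_zero {α : Type*} [MeasurableSpace α]
    {μ : Measure α} {s : Set α} (h : μ sᶜ = 0) : μ.restrict s = μ :=
  Measure.restrict_eq_self_of_ae_mem (mem_ae_iff.2 h)

lemma p1_iff_lintegral [IsFiniteMeasure μ0] (hn : 1 ≤ n) (hU : IsOpen U) (hU_compl : Uᶜ.Nonempty)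
    (hΩU : Ω ⊆ U) (hμ0 : μ0 Ωᶜ = 0) (hw_meas : AEStronglyMeasurable w (volume.restrict Ω))
    (hw : 0 ≤ᵐ[volume.restrict Ω] w) :
    P1 Ω U μ0 w ↔ ∃ C : ℝ, 0 < C ∧ ∀ f v, MemG U f v → Integrable f μ0 →
      ∫⁻ x, ‖f x - ⨍ y, f y ∂μ0‖ₑ ∂μ0 ≤ ENNReal.ofReal C * weightedEnergy Ω w v := by
  have hrestrict : μ0.restrict Ω = μ0 := restrict_eq_self_of_measure_compl_eq_zero hμ0
  have hΩ_univ : μ0 Ω = μ0 univ := by rw [← Measure.restrict_apply_univ, hrestrict]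
  have hmean (f : En n → ℝ) : (∫ y in Ω, f y ∂μ0) / (μ0 Ω).toReal = ⨍ y, f y ∂μ0 := by
    rw [hrestrict, hΩ_univ, average_eq, smul_eq_mul, div_eq_inv_mul, measureReal_def]
  refine exists_congr fun C ↦ and_congr_right fun hC ↦ forall₂_congr fun f v ↦ ?_
  rw [MemE, and_imp, and_imp]
  refine forall₂_congr fun hG hf ↦ ?_
  have hv : AEStronglyMeasurable v (volume.restrict Ω) :=
    (hG.locallyIntegrableOn_gradient hn hU hU_compl).aestronglyMeasurable.mono_measure
      (Measure.restrict_mono_set volume hΩU)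
  rw [integrableOn_norm_mul_iff_weightedEnergy_ne_top hv hw_meas hw, hmean, hrestrict]
  by_cases hE : weightedEnergy Ω w v = ∞
  · simp [hE, hC]
  have hvw := (integrableOn_norm_mul_iff_weightedEnergy_ne_top hv hw_meas hw).2 hE
  have hnonneg : 0 ≤ C * ∫ x in Ω, ‖v x‖ * w x :=
    mul_nonneg hC.le (integral_nonneg_of_ae (hw.mono fun _ hx ↦ mul_nonneg (norm_nonneg _) hx))
  simp only [ne_eq, hE, not_false_eq_true, true_imp_iff]
  have hdev : ENNReal.ofReal (∫ x, |f x - ⨍ y, f y ∂μ0| ∂μ0) = ∫⁻ x, ‖f x - ⨍ y, f y ∂μ0‖ₑ ∂μ0 :=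
    ofReal_integral_norm_eq_lintegral_enorm (hf.sub (integrable_const _))
  rw [← hdev, ← ofReal_integral_norm_mul_eq_weightedEnergy hw hvw, ← ENNReal.ofReal_mul hC.le,
    ENNReal.ofReal_le_ofReal_iff hnonneg]

lemma p1star_iff_lintegral (hμ0 : μ0 Ωᶜ = 0) :
    P1star Ω U μ0 w ↔ ∃ C : ℝ, 0 < C ∧ ∀ f v, MemG U f v → μ0 {x | f x = 0} ≠ 0 →
      ∫⁻ x, ‖f x‖ₑ ∂μ0 ≤
        ENNReal.ofReal C * (1 + μ0 univ / μ0 {x | f x = 0}) * weightedEnergy Ω w v := by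
  have hrestrict : μ0.restrict Ω = μ0 := restrict_eq_self_of_measure_compl_eq_zero hμ0
  have hΩ_univ : μ0 Ω = μ0 univ := by rw [← Measure.restrict_apply_univ, hrestrict]
  have hzero (f : En n → ℝ) : μ0 {x ∈ Ω | f x = 0} = μ0 {x | f x = 0} :=
    (congrArg μ0 (inter_comm _ _)).trans (measure_inter_conull hμ0)
  simp only [P1star, hrestrict, hΩ_univ, hzero, pos_iff_ne_zero, ← Real.enorm_eq_ofReal_abs,
    weightedEnergy]

lemma memG_of_ae_eq_zero (hf : f =ᵐ[volume] 0) : MemG U f 0 := by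
  refine ⟨?_, fun φ _ _ _ ↦ ?_, fun δ _ ↦ ⟨n + 1, lt_add_one _, MemLp.zero⟩⟩
  · exact ((integrable_zero _ _ _).congr hf.symm).locallyIntegrable.locallyIntegrableOn U
  · have hfφ : ∀ᵐ x ∂volume.restrict U, f x • gradient φ x = 0 :=
      ae_restrict_of_ae (hf.mono fun x hx ↦ by rw [hx, Pi.zero_apply, zero_smul])
    simp [integral_congr_ae hfφ]

lemma P1.ae_mem_or_ae_notMem [IsFiniteMeasure μ0] (h : P1 Ω U μ0 w) (hμ0 : μ0 Ωᶜ = 0)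
    {A : Set (En n)} (hA : MeasurableSet A) (hA0 : volume A = 0) :
    (∀ᵐ x ∂μ0, x ∈ A) ∨ ∀ᵐ x ∂μ0, x ∉ A := by
  obtain ⟨C, -, hC⟩ := h
  have hf : Integrable (A.indicator (1 : En n → ℝ)) μ0 := (integrable_const 1).indicator hA
  obtain ⟨a, ha⟩ : ∃ a : ℝ, ∀ᵐ x ∂μ0, A.indicator 1 x = a := by
    have key := hC _ _ ⟨memG_of_ae_eq_zero (indicator_meas_zero hA0), hf, by simp⟩
    rw [restrict_eq_self_of_measure_compl_eq_zero hμ0] at key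
    simp only [Pi.zero_apply, norm_zero, zero_mul, integral_zero, mul_zero] at key
    have hzero := (integral_eq_zero_iff_of_nonneg (fun _ ↦ abs_nonneg _)
      (hf.sub (integrable_const _)).abs).1 (key.antisymm (integral_nonneg fun _ ↦ abs_nonneg _))
    exact ⟨_, hzero.mono fun x hx ↦ sub_eq_zero.1 (abs_eq_zero.1 hx)⟩
  rcases eq_or_ne a 0 with rfl | ha0
  · exact .inr (ha.mono fun x hx hxA ↦ by simp [hxA] at hx)
  · exact .inl (ha.mono fun x hx ↦ of_not_not fun hxA ↦ ha0 (by simpa [hxA] using hx.symm))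

lemma P1.aestronglyMeasurable [IsFiniteMeasure μ0] (h : P1 Ω U μ0 w) (hμ0 : μ0 Ωᶜ = 0)
    (hΩU : Ω ⊆ U) (hf : LocallyIntegrableOn f U) : AEStronglyMeasurable f μ0 := by
  rcases absolutelyContinuous_or_ae_eq_of_zero_one fun A hA hA0 ↦ h.ae_mem_or_ae_notMem hμ0 hA hA0
    with hac | ⟨p, hp⟩
  · rw [← restrict_eq_self_of_measure_compl_eq_zero hμ0]
    exact (hf.aestronglyMeasurable.mono_measure (Measure.restrict_mono_set volume hΩU)).mono_ac
      (hac.restrict Ω)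
  · exact aestronglyMeasurable_const.congr (hp.mono fun x hx ↦ congrArg f hx.symm)

lemma P1.p1star [IsFiniteMeasure μ0] (h : P1 Ω U μ0 w) (hn : 1 ≤ n) (hU : IsOpen U)
    (hU_compl : Uᶜ.Nonempty) (hΩU : Ω ⊆ U) (hμ0 : μ0 Ωᶜ = 0)
    (hw_meas : AEStronglyMeasurable w (volume.restrict Ω)) (hw : 0 ≤ᵐ[volume.restrict Ω] w) :
    P1star Ω U μ0 w := by
  obtain ⟨C, hC, hP1⟩ := (p1_iff_lintegral hn hU hU_compl hΩU hμ0 hw_meas hw).1 h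
  refine (p1star_iff_lintegral hμ0).2 ⟨C, hC, fun f v hG hE ↦ ?_⟩
  have htrunc_meas (k : ℕ) : AEStronglyMeasurable (sinTrunc k ∘ f) μ0 :=
    (contDiff_sinTrunc k).continuous.comp_aestronglyMeasurable
      (h.aestronglyMeasurable hμ0 hΩU hG.1)
  refine lintegral_enorm_le_of_tendsto htrunc_meas
    (.of_forall fun x ↦ (tendsto_sinTrunc (f x)).comp tendsto_natCast_atTop_atTop) fun k ↦ ?_
  have htrunc_int : Integrable (sinTrunc k ∘ f) μ0 :=
    .of_bound (htrunc_meas k) |(k : ℝ)| (.of_forall fun x ↦ abs_sinTrunc_le k (f x))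
  have htrunc_zero : ∀ x ∈ {x | f x = 0}, (sinTrunc k ∘ f) x = 0 := fun x hx ↦ by
    rw [Function.comp_apply, hx, sinTrunc_zero]
  calc ∫⁻ x, ‖(sinTrunc k ∘ f) x‖ₑ ∂μ0
      ≤ (1 + μ0 univ / μ0 {x | f x = 0}) *
          ∫⁻ x, ‖(sinTrunc k ∘ f) x - ⨍ y, (sinTrunc k ∘ f) y ∂μ0‖ₑ ∂μ0 :=
        lintegral_enorm_le_of_eq_zero_on (htrunc_meas k) hE htrunc_zero _
    _ ≤ (1 + μ0 univ / μ0 {x | f x = 0}) * (ENNReal.ofReal C * weightedEnergy Ω w v) := by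
        gcongr
        refine (hP1 _ _ (hG.comp hn hU hU_compl (contDiff_sinTrunc k) (lipschitzWith_sinTrunc k))
          htrunc_int).trans ?_
        gcongr
        exact weightedEnergy_mono hw fun x ↦ norm_deriv_smul_le (lipschitzWith_sinTrunc k) _ _
    _ = ENNReal.ofReal C * (1 + μ0 univ / μ0 {x | f x = 0}) * weightedEnergy Ω w v := by ring

lemma P1star.exists_lintegral_posPart_le (h : P1star Ω U μ0 w) (hn : 1 ≤ n) (hU : IsOpen U)
    (hU_compl : Uᶜ.Nonempty) (hμ0 : μ0 Ωᶜ = 0) (hw : 0 ≤ᵐ[volume.restrict Ω] w) :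
    ∃ C : ℝ, 0 < C ∧ ∀ f v, MemG U f v → AEStronglyMeasurable f μ0 →
      μ0 univ / 2 ≤ μ0 {x | f x ≤ 0} →
      ∫⁻ x, ‖max (f x) 0‖ₑ ∂μ0 ≤ ENNReal.ofReal C * weightedEnergy Ω w v := by
  obtain ⟨C, hC, hP1star⟩ := (p1star_iff_lintegral hμ0).1 h
  refine ⟨C * 3, by positivity, fun f v hG hf hhalf ↦ ?_⟩
  refine lintegral_enorm_le_of_tendsto (F := fun k : ℕ ↦ smoothPosPart k ∘ f)
    (fun k ↦ (contDiff_smoothPosPart k).continuous.comp_aestronglyMeasurable hf)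
    (.of_forall fun x ↦ (tendsto_smoothPosPart (f x)).comp tendsto_natCast_atTop_atTop) fun k ↦ ?_
  rcases eq_or_ne (μ0 univ) 0 with hμ0_zero | hμ0_ne
  · simp [Measure.measure_univ_eq_zero.1 hμ0_zero]
  have hzero : μ0 univ / 2 ≤ μ0 {x | (smoothPosPart k ∘ f) x = 0} :=
    hhalf.trans (measure_mono fun x hx ↦ smoothPosPart_of_nonpos k.cast_nonneg hx)
  have hzero_ne : μ0 {x | (smoothPosPart k ∘ f) x = 0} ≠ 0 :=
    ((ENNReal.half_pos hμ0_ne).trans_le hzero).ne'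
  have hratio : 1 + μ0 univ / μ0 {x | (smoothPosPart k ∘ f) x = 0} ≤ 3 := by
    rw [show (3 : ℝ≥0∞) = 1 + 2 by norm_num]
    gcongr
    refine ENNReal.div_le_of_le_mul ?_
    rwa [mul_comm, ← ENNReal.div_le_iff_le_mul (.inl two_ne_zero) (.inl ENNReal.ofNat_ne_top)]
  refine (hP1star _ _ (hG.comp hn hU hU_compl (contDiff_smoothPosPart k)
    (lipschitzWith_smoothPosPart k)) hzero_ne).trans ?_
  rw [ENNReal.ofReal_mul hC.le, ENNReal.ofReal_ofNat]
  gcongr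
  exact weightedEnergy_mono hw fun x ↦ norm_deriv_smul_le (lipschitzWith_smoothPosPart k) _ _

lemma enorm_le_enorm_max_add_enorm_max_neg (t : ℝ) : ‖t‖ₑ ≤ ‖max t 0‖ₑ + ‖max (-t) 0‖ₑ := by
  rcases le_total 0 t with ht | ht <;> simp [ht]

lemma P1star.exists_lintegral_enorm_sub_const_le [IsFiniteMeasure μ0] (h : P1star Ω U μ0 w)
    (hn : 1 ≤ n) (hU : IsOpen U) (hU_compl : Uᶜ.Nonempty) (hμ0 : μ0 Ωᶜ = 0)
    (hw : 0 ≤ᵐ[volume.restrict Ω] w) :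
    ∃ C : ℝ, 0 < C ∧ ∀ f v, MemG U f v → AEStronglyMeasurable f μ0 →
      ∃ c, ∫⁻ x, ‖f x - c‖ₑ ∂μ0 ≤ ENNReal.ofReal C * weightedEnergy Ω w v := by
  obtain ⟨C, hC, hpos⟩ := h.exists_lintegral_posPart_le hn hU hU_compl hμ0 hw
  refine ⟨2 * C, by positivity, fun f v hG hf ↦ ?_⟩
  obtain ⟨c, hc_le, hc_ge⟩ := exists_half_measure_univ_le_Iic_and_Ici (μ0.map f)
  rw [Measure.map_apply_of_aemeasurable hf.aemeasurable .univ, preimage_univ] at hc_le hc_ge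
  rw [Measure.map_apply_of_aemeasurable hf.aemeasurable measurableSet_Iic] at hc_le
  rw [Measure.map_apply_of_aemeasurable hf.aemeasurable measurableSet_Ici] at hc_ge
  have hbound {ψ : ℝ → ℝ} (hψ : ContDiff ℝ 1 ψ) (hψ_lip : LipschitzWith 1 ψ)
      (hhalf : μ0 univ / 2 ≤ μ0 {x | ψ (f x) ≤ 0}) :
      ∫⁻ x, ‖max (ψ (f x)) 0‖ₑ ∂μ0 ≤ ENNReal.ofReal C * weightedEnergy Ω w v := by
    refine (hpos _ _ (hG.comp hn hU hU_compl hψ hψ_lip)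
      (hψ.continuous.comp_aestronglyMeasurable hf) hhalf).trans ?_
    gcongr
    exact weightedEnergy_mono hw fun x ↦ norm_deriv_smul_le hψ_lip _ _
  have hsub_contDiff : ContDiff ℝ 1 fun t : ℝ ↦ t - c := contDiff_id.sub contDiff_const
  have hsub_lip : LipschitzWith 1 fun t : ℝ ↦ t - c := .of_dist_le_mul fun s t ↦ by simp
  have habove : ∫⁻ x, ‖max (f x - c) 0‖ₑ ∂μ0 ≤ ENNReal.ofReal C * weightedEnergy Ω w v :=
    hbound hsub_contDiff hsub_lip
      (hc_le.trans (measure_mono fun x (hx : f x ≤ c) ↦ sub_nonpos.2 hx))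
  have hbelow : ∫⁻ x, ‖max (-(f x - c)) 0‖ₑ ∂μ0 ≤ ENNReal.ofReal C * weightedEnergy Ω w v :=
    hbound hsub_contDiff.neg hsub_lip.neg
      (hc_ge.trans (measure_mono fun x (hx : c ≤ f x) ↦ neg_nonpos.2 (sub_nonneg.2 hx)))
  refine ⟨c, ?_⟩
  calc ∫⁻ x, ‖f x - c‖ₑ ∂μ0
      ≤ ∫⁻ x, (‖max (f x - c) 0‖ₑ + ‖max (-(f x - c)) 0‖ₑ) ∂μ0 :=
        lintegral_mono fun x ↦ enorm_le_enorm_max_add_enorm_max_neg (f x - c)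
    _ = ∫⁻ x, ‖max (f x - c) 0‖ₑ ∂μ0 + ∫⁻ x, ‖max (-(f x - c)) 0‖ₑ ∂μ0 :=
        lintegral_add_left' ((hf.aemeasurable.sub_const c).max aemeasurable_const).enorm _
    _ ≤ ENNReal.ofReal (2 * C) * weightedEnergy Ω w v := by
        rw [ENNReal.ofReal_mul zero_le_two, ENNReal.ofReal_ofNat, mul_assoc, two_mul]
        exact add_le_add habove hbelow

lemma P1star.p1 [IsFiniteMeasure μ0] (h : P1star Ω U μ0 w) (hn : 1 ≤ n) (hU : IsOpen U)
    (hU_compl : Uᶜ.Nonempty) (hΩU : Ω ⊆ U) (hμ0 : μ0 Ωᶜ = 0)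
    (hw_meas : AEStronglyMeasurable w (volume.restrict Ω)) (hw : 0 ≤ᵐ[volume.restrict Ω] w) :
    P1 Ω U μ0 w := by
  obtain ⟨C, hC, hconst⟩ := h.exists_lintegral_enorm_sub_const_le hn hU hU_compl hμ0 hw
  refine (p1_iff_lintegral hn hU hU_compl hΩU hμ0 hw_meas hw).2
    ⟨2 * C, by positivity, fun f v hG hf ↦ ?_⟩
  obtain ⟨c, hc⟩ := hconst f v hG hf.1
  rw [ENNReal.ofReal_mul zero_le_two, ENNReal.ofReal_ofNat, mul_assoc]
  exact (lintegral_enorm_sub_average_le hf c).trans (by gcongr)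

theorem stmt_10_general [IsFiniteMeasure μ0] (hn : 1 ≤ n) (hU : IsOpen U)
    (hU_compl : Uᶜ.Nonempty) (hΩU : Ω ⊆ U) (hμ0 : μ0 Ωᶜ = 0)
    (hw_meas : AEStronglyMeasurable w (volume.restrict Ω)) (hw : 0 ≤ᵐ[volume.restrict Ω] w) :
    P1 Ω U μ0 w ↔ P1star Ω U μ0 w :=
  ⟨fun h ↦ h.p1star hn hU hU_compl hΩU hμ0 hw_meas hw,
    fun h ↦ h.p1 hn hU hU_compl hΩU hμ0 hw_meas hw⟩

end Poincare

section HatSet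

variable {n : ℕ} {Ω Ot : Set (En n)}

lemma hatSet_eq_interior (hOt : Otᶜ.Nonempty) : hatSet Ot = interior Ot := by
  ext x
  rw [hatSet, mem_ofPred_eq, ← infDist_pos_iff_notMem_closure hOt, closure_compl, notMem_compl_iff]
  exact and_iff_right_of_imp fun hx ↦ interior_subset hx

lemma nonempty_compl_of_measure_sdiff_eq_zero (hn : 1 ≤ n) (hΩ : Bornology.IsBounded Ω)
    (hOt : volume (Ot \ Ω) = 0) : Otᶜ.Nonempty := by
  have : Nonempty (Fin n) := ⟨⟨0, hn⟩⟩
  have : NoncompactSpace (En n) := NormedSpace.noncompactSpace ℝ (En n)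
  rw [nonempty_compl]
  rintro rfl
  refine (hΩ.measure_lt_top (μ := volume)).ne (top_le_iff.1 ?_)
  calc ∞ = volume (univ : Set (En n)) := (measure_univ_of_isAddLeftInvariant _).symm
    _ ≤ volume Ω := measure_mono_ae ((ae_le_set (μ := volume)).2 hOt)

end HatSet

/-- (Proposition 4.1 (1).) For a bounded domain `Ω ⊆ ℝⁿ`, a nontrivial
finite positive Radon measure `μ0` on `Ω` and a weight `w ∈ L¹(Ω)`, `w > 0` a.e.,
the Poincaré inequalities `(P1)` and `(P1*)` are equivalent. -/
theorem stmt_10 (n : ℕ) (hn : 1 ≤ n) (Ω Ot : Set (En n))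
    (hΩopen : IsOpen Ω) (hΩconn : IsConnected Ω) (hΩbdd : Bornology.IsBounded Ω)
    (hcov : Ω ⊆ Ot) (hcovnull : volume (Ot \ Ω) = 0)
    (μ0 : Measure (En n)) [IsFiniteMeasure μ0] (hμ0ne : μ0 ≠ 0) (hμ0supp : μ0 Ωᶜ = 0)
    (w : En n → ℝ) (hwint : IntegrableOn w Ω volume)
    (hwpos : ∀ᵐ x ∂volume.restrict Ω, 0 < w x) :
    P1 Ω (hatSet Ot) μ0 w ↔ P1star Ω (hatSet Ot) μ0 w := by
  have hOt_compl : Otᶜ.Nonempty := nonempty_compl_of_measure_sdiff_eq_zero hn hΩbdd hcovnull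
  rw [hatSet_eq_interior hOt_compl]
  exact stmt_10_general hn isOpen_interior (hOt_compl.mono (compl_subset_compl.2 interior_subset))
    (interior_maximal hcov hΩopen) hμ0supp hwint.aestronglyMeasurable
    (hwpos.mono fun _ hx ↦ hx.le)
end
end
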